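/- arXiv:2501.16647 — 3 statements merged into one kernel-verified Lean document; each statement's English description precedes it below -/
import Mathlib

section
/- Let s ∈ (3/2, 2) and α = s − 3/2. There is a constant C ≥ 0, depending only on s, such that every injective C¹ immersion γ : 𝕋 → ℝⁿ satisfies |D_γγ(y) − D_γγ(x)| ≤ C · √(E(γ)) · d_γ(x,y)^α for all x, y ∈ 𝕋. -/
open MeasureTheory Real Filter Set
open scoped ENNReal Topology RealInnerProductSpace

noncomputable section

/-- Euclidean space `ℝⁿ`. -/
abbrev En (n : ℕ) : Type := EuclideanSpace ℝ (Fin n)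

/-- A fundamental domain for the circle `𝕋 = ℝ/ℤ`. -/
def I01 : Set ℝ := Set.Ico (0 : ℝ) 1

/-- The intrinsic distance on `𝕋 = ℝ/ℤ`, expressed for real representatives. -/
def dT (x y : ℝ) : ℝ := ⨅ k : ℤ, |x - y - (k : ℝ)|

/-- Supremum norm of a (periodic) function on the circle. -/
def supNorm {E : Type*} [NormedAddCommGroup E] (f : ℝ → E) : ℝ := ⨆ x : ℝ, ‖f x‖

/-- The squared Gagliardo seminorm `[v]_{H^σ}²` of a function on the circle, valued in `[0,∞]`. -/
def gagliardoSqE {E : Type*} [NormedAddCommGroup E] (σ : ℝ) (v : ℝ → E) : ℝ≥0∞ :=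
  ∫⁻ x in I01, ∫⁻ y in I01, ENNReal.ofReal (‖v y - v x‖ ^ 2 / dT x y ^ (2 * σ + 1))

/-- Membership in the Sobolev–Slobodeckij space `H^s(𝕋, ℝⁿ)`; for `s ∈ (3/2,2)` such
functions have a `C¹` representative, which we take as the defining data. -/
def InHs {n : ℕ} (s : ℝ) (u : ℝ → En n) : Prop :=
  Function.Periodic u 1 ∧ ContDiff ℝ 1 u ∧ gagliardoSqE (s - 1) (deriv u) < ⊤

/-- The squared `H^s` norm `‖u‖²_{L²} + ‖u'‖²_{L²} + [u']²_{H^{s-1}}`. -/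
def HsNormSq {n : ℕ} (s : ℝ) (u : ℝ → En n) : ℝ :=
  (∫ x in I01, ‖u x‖ ^ 2) + (∫ x in I01, ‖deriv u x‖ ^ 2) +
    (gagliardoSqE (s - 1) (deriv u)).toReal

/-- The `H^s` norm. -/
def HsNorm {n : ℕ} (s : ℝ) (u : ℝ → En n) : ℝ := Real.sqrt (HsNormSq s u)

/-- The `H^s` inner product. -/
def HsInner {n : ℕ} (s : ℝ) (u v : ℝ → En n) : ℝ :=
  (∫ x in I01, ⟪u x, v x⟫) + (∫ x in I01, ⟪deriv u x, deriv v x⟫) +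
    ∫ x in I01, ∫ y in I01,
      ⟪deriv u y - deriv u x, deriv v y - deriv v x⟫ / dT x y ^ (2 * (s - 1) + 1)

/-- The manifold `𝓜` of embedded closed curves of class `H^s`: injective (on the circle)
immersions. -/
def InM {n : ℕ} (s : ℝ) (γ : ℝ → En n) : Prop :=
  InHs s γ ∧ Set.InjOn γ I01 ∧ ∀ x, deriv γ x ≠ 0

/-- The length `L(γ)`. -/
def arcLen {n : ℕ} (γ : ℝ → En n) : ℝ := ∫ x in I01, ‖deriv γ x‖

/-- The arc-length distance `d_γ(x,y)`: the length of the shorter of the two arcs of `γ`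
between `x` and `y`. -/
def arcDist {n : ℕ} (γ : ℝ → En n) (x y : ℝ) : ℝ :=
  ⨅ k : ℤ, |∫ t in x..(y + (k : ℝ)), ‖deriv γ t‖|

/-- Derivative with respect to arc length, `D_γ u = u' / |γ'|`. -/
def Dg {n : ℕ} (γ u : ℝ → En n) (x : ℝ) : En n := ‖deriv γ x‖⁻¹ • deriv u x

/-- `𝒟_γ u (x)`, the pointwise linear map `w ↦ |γ'(x)|⁻² ⟪γ'(x), w⟫ u'(x)`. -/
def DDg {n : ℕ} (γ u : ℝ → En n) (x : ℝ) (w : En n) : En n :=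
  ((‖deriv γ x‖ ^ 2)⁻¹ * ⟪deriv γ x, w⟫) • deriv u x

/-- The operator `R^s_γ`. -/
def Rop {n : ℕ} (s : ℝ) (γ u : ℝ → En n) (x y : ℝ) : En n :=
  (‖γ y - γ x‖ ^ s)⁻¹ • (u y - u x - DDg γ u x (γ y - γ x))

/-- Density of the measure `μ_γ` with respect to `λ ⊗ λ` on `𝕋 × 𝕋`. -/
def muW {n : ℕ} (γ : ℝ → En n) (x y : ℝ) : ℝ :=
  ‖deriv γ x‖ * ‖deriv γ y‖ / ‖γ y - γ x‖

/-- Density of the measure `ν_γ` with respect to `λ ⊗ λ` on `𝕋 × 𝕋`. -/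
def nuW {n : ℕ} (γ : ℝ → En n) (x y : ℝ) : ℝ :=
  ‖deriv γ x‖ * ‖deriv γ y‖ / arcDist γ x y

/-- The tangent-point energy, valued in `[0,∞]`. -/
def EtpE {n : ℕ} (s : ℝ) (γ : ℝ → En n) : ℝ≥0∞ :=
  ∫⁻ x in I01, ∫⁻ y in I01, ENNReal.ofReal (‖Rop s γ γ x y‖ ^ 2 * muW γ x y)

/-- The tangent-point energy, real-valued (finite on `𝓜`). -/
def Etp {n : ℕ} (s : ℝ) (γ : ℝ → En n) : ℝ := (EtpE s γ).toReal

/-- `‖R^s_γ u‖²_{L²(ν_γ)}`, valued in `[0,∞]`. -/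
def RnuSqE {n : ℕ} (s : ℝ) (γ u : ℝ → En n) : ℝ≥0∞ :=
  ∫⁻ x in I01, ∫⁻ y in I01, ENNReal.ofReal (‖Rop s γ u x y‖ ^ 2 * nuW γ x y)

/-- `‖R^s_γ u‖²_{L²(ν_γ)}`, real-valued. -/
def RnuSq {n : ℕ} (s : ℝ) (γ u : ℝ → En n) : ℝ := (RnuSqE s γ u).toReal

/-- The squared `γ`-dependent seminorm `[u]²_{H^s(γ)}`, valued in `[0,∞]`. -/
def gagGammaSqE {n : ℕ} (s : ℝ) (γ u : ℝ → En n) : ℝ≥0∞ :=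
  ∫⁻ x in I01, ∫⁻ y in I01,
    ENNReal.ofReal (‖Dg γ u y - Dg γ u x‖ ^ 2 / arcDist γ x y ^ (2 * (s - 1)) * nuW γ x y)

/-- The squared `γ`-dependent seminorm `[u]²_{H^s(γ)}`, real-valued. -/
def gagGammaSq {n : ℕ} (s : ℝ) (γ u : ℝ → En n) : ℝ := (gagGammaSqE s γ u).toReal

/-- The inner product `⟨u,v⟩_{L²(γ)}`. -/
def innerL2g {n : ℕ} (γ u v : ℝ → En n) : ℝ := ∫ x in I01, ⟪u x, v x⟫ * ‖deriv γ x‖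

/-- The inner product `⟨u,v⟩_{H¹(γ)}`. -/
def innerH1g {n : ℕ} (γ u v : ℝ → En n) : ℝ :=
  ∫ x in I01, ⟪Dg γ u x, Dg γ v x⟫ * ‖deriv γ x‖

/-- The squared `γ`-dependent norm `‖u‖²_{H^s(γ)}`. -/
def HsGammaNormSq {n : ℕ} (s : ℝ) (γ u : ℝ → En n) : ℝ :=
  innerL2g γ u u + innerH1g γ u u + gagGammaSq s γ u

/-- The `γ`-dependent norm `‖u‖_{H^s(γ)}`. -/
def HsGammaNorm {n : ℕ} (s : ℝ) (γ u : ℝ → En n) : ℝ := Real.sqrt (HsGammaNormSq s γ u)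

/-- The bilinear form `B¹_γ`. -/
def B1 {n : ℕ} (s : ℝ) (γ u v : ℝ → En n) : ℝ :=
  ∫ x in I01, ∫ y in I01, ⟪Rop s γ u x y, Rop s γ v x y⟫ * muW γ x y

/-- The bilinear form `B²_γ`. -/
def B2 {n : ℕ} (s : ℝ) (γ u v : ℝ → En n) : ℝ :=
  ∫ x in I01, ∫ y in I01,
    ‖Rop s γ γ x y‖ ^ 2 * (⟪u y - u x, v y - v x⟫ / ‖γ y - γ x‖ ^ 2) * muW γ x y

/-- The bilinear form `B³_γ`. -/
def B3 {n : ℕ} (s : ℝ) (γ u v : ℝ → En n) : ℝ :=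
  ∫ x in I01, ∫ y in I01,
    ‖Rop s γ γ x y‖ ^ 2 * (⟪Dg γ u x, Dg γ v x⟫ + ⟪Dg γ u y, Dg γ v y⟫) * muW γ x y

/-- The Riemannian metric `G_γ(u,v)`. -/
def Gmet {n : ℕ} (s : ℝ) (γ u v : ℝ → En n) : ℝ :=
  2 * B1 s γ u v + (2 * s + 1) * B2 s γ u v + B3 s γ u v + innerH1g γ u v + innerL2g γ u v

/-- The distortion `distor(γ) = sup_{x ≠ y} d_γ(x,y)/|γ(y) − γ(x)|`, valued in `[0,∞]`. -/
def distorE {n : ℕ} (γ : ℝ → En n) : ℝ≥0∞ :=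
  ⨆ (x ∈ I01) (y ∈ I01) (_ : x ≠ y), ENNReal.ofReal (arcDist γ x y / ‖γ y - γ x‖)

/-- The distortion, real-valued. -/
def distor {n : ℕ} (γ : ℝ → En n) : ℝ := (distorE γ).toReal

/-- A `C¹` path `[0,1] → 𝓜 ⊂ H^s(𝕋,ℝⁿ)` (with respect to the `H^s` topology), recorded
together with its velocity field `V`. -/
structure C1Path (s : ℝ) (n : ℕ) where
  Γ : ℝ → ℝ → En n
  V : ℝ → ℝ → En n
  mem : ∀ t ∈ Set.Icc (0 : ℝ) 1, InM s (Γ t)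
  memV : ∀ t ∈ Set.Icc (0 : ℝ) 1, InHs s (V t)
  isDeriv : ∀ t ∈ Set.Icc (0 : ℝ) 1,
    Tendsto (fun h : ℝ => HsNorm s fun x => h⁻¹ • (Γ (t + h) x - Γ t x) - V t x)
      (𝓝[{h : ℝ | t + h ∈ Set.Icc (0 : ℝ) 1 ∧ h ≠ 0}] 0) (𝓝 0)
  contV : ∀ t ∈ Set.Icc (0 : ℝ) 1,
    Tendsto (fun τ : ℝ => HsNorm s fun x => V τ x - V t x) (𝓝[Set.Icc (0 : ℝ) 1] t) (𝓝 0)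

/-- Length of a path with respect to `G`. -/
def pathLen {s : ℝ} {n : ℕ} (P : C1Path s n) : ℝ :=
  ∫ t in (0 : ℝ)..1, Real.sqrt (Gmet s (P.Γ t) (P.V t) (P.V t))

/-- The path (Dirichlet) energy of a path with respect to `G`. -/
def pathEnergy {s : ℝ} {n : ℕ} (P : C1Path s n) : ℝ :=
  (1 / 2) * ∫ t in (0 : ℝ)..1, Gmet s (P.Γ t) (P.V t) (P.V t)

/-- The geodesic distance induced by `G`, valued in `[0,∞]` (`∞` if there is no path). -/
def geodDist (s : ℝ) {n : ℕ} (γ₀ γ₁ : ℝ → En n) : ℝ≥0∞ :=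
  ⨅ (P : C1Path s n) (_ : P.Γ 0 = γ₀ ∧ P.Γ 1 = γ₁), ENNReal.ofReal (pathLen P)

/-- `U ⊆ 𝓜` is bounded with respect to the geodesic distance `d_G`. -/
def GBounded (s : ℝ) {n : ℕ} (U : Set (ℝ → En n)) : Prop :=
  (∀ γ ∈ U, InM s γ) ∧
    ∃ γ₀, InM s γ₀ ∧ ∃ R : ℝ, ∀ γ ∈ U, geodDist s γ γ₀ ≤ ENNReal.ofReal R

/-- Weak convergence in the Hilbert space `H^s(𝕋,ℝⁿ)`. -/
def WeakHsTendsto {n : ℕ} (s : ℝ) (γk : ℕ → ℝ → En n) (γ : ℝ → En n) : Prop :=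
  ∀ v : ℝ → En n, InHs s v →
    Tendsto (fun k => HsInner s (γk k) v) atTop (𝓝 (HsInner s γ v))

/-- Directional derivative of `γ ↦ G_γ(u,v)` at `γ` in direction `w`. -/
def DGdir {n : ℕ} (s : ℝ) (γ w u v : ℝ → En n) : ℝ :=
  deriv (fun t : ℝ => Gmet s (fun x => γ x + t • w x) u v) 0

/-- `F'` is the derivative of the path `F` with respect to the `H^s` norm, on `S`. -/
def IsHsDerivOn {n : ℕ} (s : ℝ) (F F' : ℝ → ℝ → En n) (S : Set ℝ) : Prop :=
  ∀ t ∈ S,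
    Tendsto (fun h : ℝ => HsNorm s fun x => h⁻¹ • (F (t + h) x - F t x) - F' t x)
      (𝓝[{h : ℝ | t + h ∈ S ∧ h ≠ 0}] 0) (𝓝 0)

/-- The path `F` is continuous on `S` with respect to the `H^s` norm. -/
def HsContOn {n : ℕ} (s : ℝ) (F : ℝ → ℝ → En n) (S : Set ℝ) : Prop :=
  ∀ t ∈ S, Tendsto (fun τ : ℝ => HsNorm s fun x => F τ x - F t x) (𝓝[S] t) (𝓝 0)

/-- A solution of the geodesic initial value problem on `[0,∞)`, recorded as a triple
(position `Γ`, velocity `V`, acceleration `W`); the geodesic equation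
`Γ̈ + A_Γ(Γ̇)Γ̇ = 0` is expressed weakly via the Koszul formula for the
Christoffel operator `A`. -/
def GeodesicSol {n : ℕ} (s : ℝ) (γ₀ v₀ : ℝ → En n) (Γ V W : ℝ → ℝ → En n) : Prop :=
  (∀ t ∈ Set.Ici (0 : ℝ), InM s (Γ t) ∧ InHs s (V t) ∧ InHs s (W t)) ∧
  Γ 0 = γ₀ ∧ V 0 = v₀ ∧
  IsHsDerivOn s Γ V (Set.Ici 0) ∧ IsHsDerivOn s V W (Set.Ici 0) ∧
  HsContOn s V (Set.Ici 0) ∧ HsContOn s W (Set.Ici 0) ∧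
  ∀ t ∈ Set.Ici (0 : ℝ), ∀ w : ℝ → En n, InHs s w →
    Gmet s (Γ t) (W t) w + DGdir s (Γ t) (V t) (V t) w
      - (1 / 2) * DGdir s (Γ t) w (V t) (V t) = 0

/-- Tangent-point integrand for a unit speed curve. -/
def Gker {V : Type*} [NormedAddCommGroup V] [InnerProductSpace ℝ V] (s : ℝ) (c T : ℝ → V)
    (u v : ℝ) : ℝ≥0∞ :=
  ENNReal.ofReal (‖c v - c u - ⟪T u, c v - c u⟫ • T u‖ ^ 2 / ‖c v - c u‖ ^ (2 * s + 1))

section unitspeed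

variable {V : Type*} [NormedAddCommGroup V] [InnerProductSpace ℝ V]

lemma Gker_measurable (s : ℝ) (c T : ℝ → V) (hc : Continuous c) (hT : Continuous T) :
    Measurable (Function.uncurry (Gker s c T)) := by
  unfold Gker Function.uncurry
  have h1 : Continuous fun p : ℝ × ℝ =>
      ‖c p.2 - c p.1 - ⟪T p.1, c p.2 - c p.1⟫ • T p.1‖ ^ 2 := by fun_prop
  have h2 : Continuous fun p : ℝ × ℝ => ‖c p.2 - c p.1‖ := by fun_prop
  exact (h1.measurable.div (h2.measurable.pow_const _)).ennreal_ofReal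

lemma chord_le (c T : ℝ → V) (hc : ∀ u, HasDerivAt c (T u) u) (hT1 : ∀ u, ‖T u‖ = 1) (u v : ℝ) :
    ‖c v - c u‖ ≤ |v - u| := by
  have := Convex.norm_image_sub_le_of_norm_hasDerivWithin_le (f := c) (f' := T) (s := univ)
    (C := 1) (x := u) (y := v) (fun x _ => (hc x).hasDerivWithinAt) (fun x _ => (hT1 x).le)
    convex_univ (mem_univ _) (mem_univ _)
  simpa using this

lemma f_le (s : ℝ) (hs : 3 / 2 < s) (c T : ℝ → V) (hc : ∀ u, HasDerivAt c (T u) u)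
    (hT1 : ∀ u, ‖T u‖ = 1) (u v l M : ℝ) (hl : |v - u| ≤ l) (hl0 : 0 < l) (hM : 0 ≤ M)
    (hG : Gker s c T u v ≤ ENNReal.ofReal (M / l ^ 2)) :
    ‖c v - c u - ⟪T u, c v - c u⟫ • T u‖ ≤ √M * l ^ (s - 1 / 2) := by
  unfold Gker at hG
  rw [ENNReal.ofReal_le_ofReal_iff (by positivity)] at hG
  by_cases h0 : c v - c u = 0
  · simp only [h0]
    simp only [inner_zero_right, zero_smul, sub_zero, norm_zero]; positivity
  have hp : 0 < ‖c v - c u‖ := norm_pos_iff.2 h0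
  have hle : ‖c v - c u‖ ≤ l := (chord_le c T hc hT1 u v).trans hl
  have hpow : ‖c v - c u‖ ^ (2 * s + 1) ≤ l ^ (2 * s + 1) :=
    Real.rpow_le_rpow hp.le hle (by linarith)
  rw [div_le_iff₀ (by positivity)] at hG
  have e1 : l ^ (2 * s + 1) = (l ^ (s - 1 / 2)) ^ 2 * l ^ 2 := by
    rw [← Real.rpow_natCast, ← Real.rpow_natCast, ← Real.rpow_mul hl0.le, ← Real.rpow_add hl0]
    congr 1; push_cast; ring
  have h2 : ‖c v - c u - ⟪T u, c v - c u⟫ • T u‖ ^ 2 ≤ (√M * l ^ (s - 1 / 2)) ^ 2 := by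
    calc _ ≤ M / l ^ 2 * l ^ (2 * s + 1) := hG.trans (by gcongr)
      _ = _ := by rw [e1, mul_pow, Real.sq_sqrt hM]; field_simp
  exact abs_le_of_sq_le_sq' h2 (by positivity) |>.2

lemma unit_close (t t' w : V) (ht : ‖t‖ = 1) (ht' : ‖t'‖ = 1) (m d d' : ℝ) (hm : 0 < m)
    (h1 : m ≤ ⟪t, w⟫) (h2 : m ≤ ⟪t', w⟫) (hd : ‖w - ⟪t, w⟫ • t‖ ≤ d)
    (hd' : ‖w - ⟪t', w⟫ • t'‖ ≤ d') : ‖t - t'‖ ≤ (d + d') / m := by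
  rw [le_div_iff₀ hm]
  set a := ⟪t, w⟫
  set b := ⟪t', w⟫
  have h3 : ‖a • t - b • t'‖ ≤ d + d' := by
    have : a • t - b • t' = (w - b • t') - (w - a • t) := by abel
    rw [this]
    linarith [norm_sub_le (w - b • t') (w - a • t)]
  refine le_trans ?_ h3
  refine abs_le_of_sq_le_sq' ?_ (norm_nonneg _) |>.2
  rw [mul_pow, norm_sub_sq_real, norm_sub_sq_real, norm_smul, norm_smul, inner_smul_left,
    inner_smul_right, ht, ht']
  have hc : ⟪t, t'⟫ ≤ 1 := by simpa [ht, ht'] using real_inner_le_norm t t'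
  simp only [Real.norm_eq_abs, mul_one, sq_abs, conj_trivial]
  nlinarith [mul_nonneg (mul_nonneg (sub_nonneg.2 h1) (hm.le.trans h2)) (sub_nonneg.2 hc),
    mul_nonneg (mul_nonneg hm.le (sub_nonneg.2 h2)) (sub_nonneg.2 hc), sq_nonneg (a - b)]

lemma inner_chord (c T : ℝ → V) (hc : ∀ u, HasDerivAt c (T u) u) (A B : ℝ)
    (hT : ∀ u ∈ Icc A B, ∀ v ∈ Icc A B, 1 / 2 ≤ ⟪T u, T v⟫) (r t t' : ℝ) (hr : r ∈ Icc A B)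
    (ht : A ≤ t) (htt : t ≤ t') (ht' : t' ≤ B) :
    (t' - t) / 2 ≤ ⟪T r, c t' - c t⟫ := by
  have hd : ∀ x, HasDerivAt (fun x => ⟪T r, c x⟫) ⟪T r, T x⟫ x := fun x => by
    simpa using (hasDerivAt_const x (T r)).inner ℝ (hc x)
  have := Convex.mul_sub_le_image_sub_of_le_deriv (D := Icc A B) (convex_Icc A B)
    (f := fun x => ⟪T r, c x⟫) (fun x _ => (hd x).continuousAt.continuousWithinAt)
    (fun x _ => (hd x).differentiableAt.differentiableWithinAt) (C := 1 / 2)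
    (fun x hx => by rw [(hd x).deriv]; exact hT r hr x (interior_subset hx))
    t ⟨ht, htt.trans ht'⟩ t' ⟨ht.trans htt, ht'⟩ htt
  simp only [← inner_sub_right] at this
  linarith

lemma exists_pt (g : ℝ → ℝ≥0∞) (hg : Measurable g) (a b K : ℝ) (hab : a < b)
    (h : ∫⁻ x in Ioc a b, g x ≤ ENNReal.ofReal K) :
    ∃ x ∈ Ioc a b, g x ≤ ENNReal.ofReal (K / (b - a)) := by
  have hv : volume (Ioc a b) = ENNReal.ofReal (b - a) := Real.volume_Ioc
  obtain ⟨x, hx, hle⟩ := exists_le_setLAverage (μ := volume) (s := Ioc a b) (f := g)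
    (by rw [hv]; simpa using hab) (by rw [hv]; simp) hg.aemeasurable
  refine ⟨x, hx, hle.trans ?_⟩
  rw [setLAverage_eq, hv, ENNReal.ofReal_div_of_pos (by linarith)]
  gcongr

set_option maxHeartbeats 1000000 in
lemma step (s : ℝ) (hs : 3 / 2 < s) (c T : ℝ → V) (hc : ∀ u, HasDerivAt c (T u) u)
    (hTc : Continuous T)
    (hT1 : ∀ u, ‖T u‖ = 1) (a b : ℝ) (hab : a < b)
    (hT : ∀ u ∈ Icc a b, ∀ v ∈ Icc a b, 1 / 2 ≤ ⟪T u, T v⟫) (e : ℝ) (he : 0 ≤ e) (r r' : ℝ)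
    (hr : r ∈ Icc a b) (hr' : r' ∈ Icc a b)
    (h1 : ∫⁻ t in Ioc a b, Gker s c T r t ≤ ENNReal.ofReal (2 * e / (b - a)))
    (h2 : ∫⁻ t in Ioc a b, Gker s c T r' t ≤ ENNReal.ofReal (2 * e / (b - a))) :
    ‖T r - T r'‖ ≤ 96 * √e * (b - a) ^ (s - 3 / 2) := by
  have hcc : Continuous c := continuous_iff_continuousAt.2 fun u => (hc u).continuousAt
  have hm := Gker_measurable s c T hcc hTc
  have hmr : ∀ u, Measurable (Gker s c T u) := fun u => hm.comp measurable_prodMk_left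
  set l := b - a with hl
  have hl0 : 0 < l := by linarith
  have key : ∀ a' b', a ≤ a' → b' ≤ b → b' - a' = l / 3 → ∃ t ∈ Ioc a' b',
      ‖c t - c r - ⟪T r, c t - c r⟫ • T r‖ ≤ √(12 * e) * l ^ (s - 1 / 2) ∧
      ‖c t - c r' - ⟪T r', c t - c r'⟫ • T r'‖ ≤ √(12 * e) * l ^ (s - 1 / 2) := by
    intro a' b' ha hb hab'
    obtain ⟨t, ht, hle⟩ := exists_pt (fun t => Gker s c T r t + Gker s c T r' t)
      ((hmr r).add (hmr r')) a' b' (4 * e / l) (by linarith) (by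
        rw [lintegral_add_left (hmr r)]
        have hsub : Ioc a' b' ⊆ Ioc a b := Ioc_subset_Ioc ha hb
        have := add_le_add ((lintegral_mono_set hsub).trans h1)
          ((lintegral_mono_set hsub).trans h2)
        refine this.trans ?_
        rw [← ENNReal.ofReal_add (by positivity) (by positivity)]
        exact ENNReal.ofReal_le_ofReal (le_of_eq (by ring)))
    have e12 : 4 * e / l / (b' - a') = 12 * e / l ^ 2 := by
      rw [hab']; field_simp; ring
    rw [e12] at hle
    have htm : t ∈ Icc a b := ⟨by linarith [ht.1], by linarith [ht.2]⟩
    refine ⟨t, ht, f_le s hs c T hc hT1 r t l _ ?_ hl0 (by positivity) (le_self_add.trans hle),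
      f_le s hs c T hc hT1 r' t l _ ?_ hl0 (by positivity) (le_add_self.trans hle)⟩
    · rw [abs_le]; constructor <;> linarith [htm.1, htm.2, hr.1, hr.2]
    · rw [abs_le]; constructor <;> linarith [htm.1, htm.2, hr'.1, hr'.2]
  obtain ⟨t, ht, hf1, hf2⟩ := key a (a + l / 3) le_rfl (by linarith) (by ring)
  obtain ⟨t', ht', hf3, hf4⟩ := key (b - l / 3) b (by linarith) le_rfl (by ring)
  have htt : l / 3 ≤ t' - t := by linarith [ht.2, ht'.1]
  have tri : ∀ r, ‖c t - c r - ⟪T r, c t - c r⟫ • T r‖ ≤ √(12 * e) * l ^ (s - 1 / 2) →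
      ‖c t' - c r - ⟪T r, c t' - c r⟫ • T r‖ ≤ √(12 * e) * l ^ (s - 1 / 2) →
      ‖(c t' - c t) - ⟪T r, c t' - c t⟫ • T r‖ ≤ 2 * (√(12 * e) * l ^ (s - 1 / 2)) := by
    intro r h1 h2
    have : (c t' - c t) - ⟪T r, c t' - c t⟫ • T r =
        (c t' - c r - ⟪T r, c t' - c r⟫ • T r) - (c t - c r - ⟪T r, c t - c r⟫ • T r) := by
      simp only [inner_sub_right, sub_smul]; abel
    rw [this]
    linarith [norm_sub_le (c t' - c r - ⟪T r, c t' - c r⟫ • T r)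
      (c t - c r - ⟪T r, c t - c r⟫ • T r)]
  have hin : ∀ r ∈ Icc a b, l / 6 ≤ ⟪T r, c t' - c t⟫ := fun r hr => by
    have := inner_chord c T hc a b hT r t t' hr ht.1.le (by linarith) ht'.2
    linarith
  have := unit_close (T r) (T r') (c t' - c t) (hT1 _) (hT1 _) (l / 6) _ _ (by positivity)
    (hin r hr) (hin r' hr') (tri r hf1 hf3) (tri r' hf2 hf4)
  refine this.trans ?_
  have h12 : √(12 * e) ≤ 4 * √e := by
    rw [Real.sqrt_le_left (by positivity), mul_pow, Real.sq_sqrt he]; linarith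
  have e2 : l ^ (s - 1 / 2) = l ^ (s - 3 / 2) * l := by
    rw [← Real.rpow_add_one hl0.ne']; congr 1; ring
  rw [div_le_iff₀ (by positivity), e2]
  have : √(12 * e) * (l ^ (s - 3 / 2) * l) ≤ 4 * √e * (l ^ (s - 3 / 2) * l) := by gcongr
  nlinarith

lemma endpoint (s : ℝ) (hs : 3 / 2 < s) (c T : ℝ → V) (hc : ∀ u, HasDerivAt c (T u) u)
    (hTc : Continuous T)
    (hT1 : ∀ u, ‖T u‖ = 1) (A B : ℝ) (hab : A < B)
    (hT : ∀ u ∈ Icc A B, ∀ v ∈ Icc A B, 1 / 2 ≤ ⟪T u, T v⟫) (e : ℝ) (he : 0 ≤ e)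
    (hE : ∫⁻ u in Ioc A B, ∫⁻ t in Ioc A B, Gker s c T u t ≤ ENNReal.ofReal e)
    (p : ℝ) (hp : p ∈ Icc A B) :
    ∃ r ∈ Icc A B, ∫⁻ t in Ioc A B, Gker s c T r t ≤ ENNReal.ofReal (2 * e / (B - A)) ∧
      ‖T r - T p‖ ≤ 96 * √e * (B - A) ^ (s - 3 / 2) / (1 - (1 / 2) ^ (s - 3 / 2)) := by
  have hcc : Continuous c := continuous_iff_continuousAt.2 fun u => (hc u).continuousAt
  have hm := Gker_measurable s c T hcc hTc
  have hF : Measurable fun u => ∫⁻ t in Ioc A B, Gker s c T u t :=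
    hm.lintegral_prod_right'
  set l := B - A with hl
  have hl0 : 0 < l := by linarith
  set a : ℕ → ℝ := fun k => p - (1 / 2) ^ k * (p - A) with ha
  set b : ℕ → ℝ := fun k => p + (1 / 2) ^ k * (B - p) with hb
  have hba : ∀ k, b k - a k = (1 / 2) ^ k * l := fun k => by simp only [ha, hb, hl]; ring
  have hbap : ∀ k, 0 < b k - a k := fun k => by rw [hba]; positivity
  have hpA : 0 ≤ p - A := by linarith [hp.1]
  have hpB : 0 ≤ B - p := by linarith [hp.2]
  have hk1 : ∀ k : ℕ, (1 / 2 : ℝ) ^ k ≤ 1 := fun k => pow_le_one₀ (by norm_num) (by norm_num)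
  have haA : ∀ k, A ≤ a k := fun k => by
    simp only [ha]; nlinarith [hk1 k]
  have hbB : ∀ k, b k ≤ B := fun k => by
    simp only [hb]; nlinarith [hk1 k]
  have hk0 : ∀ k : ℕ, (0 : ℝ) < (1 / 2) ^ k := fun k => by positivity
  have haa : ∀ k, a k ≤ a (k + 1) := fun k => by
    simp only [ha, pow_succ]; nlinarith [mul_nonneg (hk0 k).le hpA]
  have hbb : ∀ k, b (k + 1) ≤ b k := fun k => by
    simp only [hb, pow_succ]; nlinarith [mul_nonneg (hk0 k).le hpB]
  have hex : ∀ k, ∃ r ∈ Ioc (a k) (b k),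
      ∫⁻ t in Ioc A B, Gker s c T r t ≤ ENNReal.ofReal (e / (b k - a k)) := fun k =>
    exists_pt _ hF (a k) (b k) e (by linarith [hbap k])
      ((lintegral_mono_set (Ioc_subset_Ioc (haA k) (hbB k))).trans hE)
  choose r hr hrF using hex
  have hstep : ∀ k, dist (T (r k)) (T (r (k + 1))) ≤
      96 * √e * l ^ (s - 3 / 2) * ((1 / 2) ^ (s - 3 / 2)) ^ k := by
    intro k
    have hsub : Ioc (a k) (b k) ⊆ Ioc A B := Ioc_subset_Ioc (haA k) (hbB k)
    have hsub' : Icc (a k) (b k) ⊆ Icc A B := Icc_subset_Icc (haA k) (hbB k)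
    have := step s hs c T hc hTc hT1 (a k) (b k) (by linarith [hbap k])
      (fun u hu v hv => hT u (hsub' hu) v (hsub' hv)) e he (r k) (r (k + 1))
      (Ioc_subset_Icc_self (hr k))
      ⟨(haa k).trans (hr (k + 1)).1.le, (hr (k + 1)).2.trans (hbb k)⟩
      ((lintegral_mono_set hsub).trans ((hrF k).trans (ENNReal.ofReal_le_ofReal (by
        have := hbap k
        gcongr; linarith))))
      ((lintegral_mono_set hsub).trans ((hrF (k + 1)).trans (ENNReal.ofReal_le_ofReal (by
        rw [hba, hba, pow_succ]
        have := hk0 k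
        apply le_of_eq; field_simp))))
    rw [dist_eq_norm]
    refine this.trans (le_of_eq ?_)
    rw [hba, Real.mul_rpow (hk0 k).le hl0.le, ← Real.rpow_natCast, ← Real.rpow_natCast,
      ← Real.rpow_mul (by norm_num), ← Real.rpow_mul (by norm_num), mul_comm (k : ℝ)]
    ring
  have hpow : Tendsto (fun k : ℕ => (1 / 2 : ℝ) ^ k) atTop (𝓝 0) :=
    tendsto_pow_atTop_nhds_zero_of_lt_one (by norm_num) (by norm_num)
  have hlima : Tendsto a atTop (𝓝 p) := by
    simpa [ha] using (hpow.mul_const (p - A)).const_sub p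
  have hlimb : Tendsto b atTop (𝓝 p) := by
    simpa [hb] using (hpow.mul_const (B - p)).const_add p
  have hlim : Tendsto r atTop (𝓝 p) := tendsto_of_tendsto_of_tendsto_of_le_of_le hlima hlimb
    (fun k => (hr k).1.le) (fun k => (hr k).2)
  have hq : (1 / 2 : ℝ) ^ (s - 3 / 2) < 1 :=
    Real.rpow_lt_one (by norm_num) (by norm_num) (by linarith)
  have hfin := dist_le_of_le_geometric_of_tendsto₀ _ _ hq hstep
    ((hTc.tendsto p).comp hlim)
  refine ⟨r 0, ⟨(haA 0).trans (hr 0).1.le, (hr 0).2.trans (hbB 0)⟩, ?_, ?_⟩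
  · refine (hrF 0).trans (ENNReal.ofReal_le_ofReal ?_)
    rw [hba]; simp only [pow_zero, one_mul]
    gcongr; linarith
  · rw [← dist_eq_norm]; exact hfin

lemma linear_case (s : ℝ) (hs : 3 / 2 < s) (c T : ℝ → V) (hc : ∀ u, HasDerivAt c (T u) u)
    (hTc : Continuous T)
    (hT1 : ∀ u, ‖T u‖ = 1) (A B : ℝ) (hab : A < B)
    (hT : ∀ u ∈ Icc A B, ‖T u - T A‖ ≤ 1 / 2) (e : ℝ) (he : 0 ≤ e)
    (hE : ∫⁻ u in Ioc A B, ∫⁻ t in Ioc A B, Gker s c T u t ≤ ENNReal.ofReal e) :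
    ‖T B - T A‖ ≤ (192 / (1 - (1 / 2) ^ (s - 3 / 2)) + 96) * √e * (B - A) ^ (s - 3 / 2) := by
  have hT' : ∀ u ∈ Icc A B, ∀ v ∈ Icc A B, 1 / 2 ≤ ⟪T u, T v⟫ := by
    intro u hu v hv
    have h1 : ‖T u - T v‖ ≤ 1 := by
      have := norm_sub_le (T u - T A) (T v - T A)
      rw [sub_sub_sub_cancel_right] at this
      linarith [hT u hu, hT v hv]
    have h2 := norm_sub_sq_real (T u) (T v)
    rw [hT1, hT1] at h2
    nlinarith [norm_nonneg (T u - T v)]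
  obtain ⟨r, hr, hrF, h1⟩ := endpoint s hs c T hc hTc hT1 A B hab hT' e he hE A ⟨le_rfl, hab.le⟩
  obtain ⟨r', hr', hrF', h2⟩ := endpoint s hs c T hc hTc hT1 A B hab hT' e he hE B ⟨hab.le, le_rfl⟩
  have h3 := step s hs c T hc hTc hT1 A B hab hT' e he r r' hr hr' hrF hrF'
  have h4 : ‖T B - T A‖ ≤ ‖T r - T A‖ + ‖T r - T r'‖ + ‖T r' - T B‖ := by
    have : T B - T A = (T r - T A) - (T r - T r') - (T r' - T B) := by abel
    rw [this]
    linarith [norm_sub_le ((T r - T A) - (T r - T r')) (T r' - T B),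
      norm_sub_le (T r - T A) (T r - T r')]
  refine h4.trans ?_
  have : (192 / (1 - (1 / 2) ^ (s - 3 / 2)) + 96) * √e * (B - A) ^ (s - 3 / 2) =
    96 * √e * (B - A) ^ (s - 3 / 2) / (1 - (1 / 2) ^ (s - 3 / 2)) +
    96 * √e * (B - A) ^ (s - 3 / 2) +
    96 * √e * (B - A) ^ (s - 3 / 2) / (1 - (1 / 2) ^ (s - 3 / 2)) := by ring
  rw [this]
  linarith

/-- The constant. -/
def Cmor (s : ℝ) : ℝ := 4 * (192 / (1 - (1 / 2 : ℝ) ^ (s - 3 / 2)) + 96)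

lemma Cmor_pos (s : ℝ) (hs : 3 / 2 < s) : 0 < Cmor s := by
  have hq : (1 / 2 : ℝ) ^ (s - 3 / 2) < 1 :=
    Real.rpow_lt_one (by norm_num) (by norm_num) (by linarith)
  have : 0 < 1 - (1 / 2 : ℝ) ^ (s - 3 / 2) := by linarith
  unfold Cmor; positivity

lemma unit_speed (s : ℝ) (hs : 3 / 2 < s) (c T : ℝ → V) (hc : ∀ u, HasDerivAt c (T u) u)
    (hTc : Continuous T)
    (hT1 : ∀ u, ‖T u‖ = 1) (A B : ℝ) (hab : A < B) (e : ℝ) (he : 0 ≤ e)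
    (hE : ∫⁻ u in Ioc A B, ∫⁻ t in Ioc A B, Gker s c T u t ≤ ENNReal.ofReal e) :
    ‖T B - T A‖ ≤ Cmor s * √e * (B - A) ^ (s - 3 / 2) := by
  set K := (192 / (1 - (1 / 2 : ℝ) ^ (s - 3 / 2)) + 96) with hK
  have hCK : Cmor s = 4 * K := rfl
  have hK0 : 0 < K := by linarith [Cmor_pos s hs]
  have hBA : 0 < B - A := by linarith
  have hP : 0 ≤ K * √e * (B - A) ^ (s - 3 / 2) := by positivity
  by_cases hT : ∀ u ∈ Icc A B, ‖T u - T A‖ ≤ 1 / 2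
  · have := linear_case s hs c T hc hTc hT1 A B hab hT e he hE
    rw [hCK]; nlinarith
  -- first exit point
  push Not at hT
  obtain ⟨u, hu, hu2⟩ := hT
  set g : ℝ → ℝ := fun t => ‖T t - T A‖ with hg
  have hgc : Continuous g := by fun_prop
  set S : Set ℝ := Icc A B ∩ {t | 1 / 2 ≤ g t} with hS
  have hSc : IsCompact S := isCompact_Icc.inter_right (isClosed_le continuous_const hgc)
  obtain ⟨b, hb, hmin⟩ := hSc.exists_isLeast ⟨u, hu, hu2.le⟩
  have hbA : A < b := by
    rcases hb.1.1.lt_or_eq with h | h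
    · exact h
    · exfalso
      have := hb.2
      simp only [hg, mem_ofPred_eq, ← h, sub_self, norm_zero] at this
      norm_num at this
  have hlt : ∀ t ∈ Ico A b, g t ≤ 1 / 2 := by
    intro t ht
    by_contra hcon
    push Not at hcon
    exact absurd (hmin ⟨⟨ht.1, ht.2.le.trans hb.1.2⟩, hcon.le⟩) (not_le.2 ht.2)
  have hle : ∀ t ∈ Icc A b, g t ≤ 1 / 2 := by
    intro t ht
    have hcl : IsClosed {t | g t ≤ 1 / 2} := isClosed_le hgc continuous_const
    have : closure (Ico A b) ⊆ {t | g t ≤ 1 / 2} := closure_minimal hlt hcl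
    rw [closure_Ico hbA.ne] at this
    exact this ht
  have hsub : Ioc A b ⊆ Ioc A B := Ioc_subset_Ioc le_rfl hb.1.2
  have h1 := linear_case s hs c T hc hTc hT1 A b hbA hle e he
    (((lintegral_mono_set hsub).trans (lintegral_mono fun x => lintegral_mono_set hsub)).trans hE)
  have h2 : (1 / 2 : ℝ) ≤ ‖T b - T A‖ := hb.2
  have h3 : (b - A) ^ (s - 3 / 2) ≤ (B - A) ^ (s - 3 / 2) :=
    Real.rpow_le_rpow (by linarith) (by linarith [hb.1.2]) (by linarith)
  have h4 : K * √e * (b - A) ^ (s - 3 / 2) ≤ K * √e * (B - A) ^ (s - 3 / 2) := by gcongr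
  have h5 : ‖T B - T A‖ ≤ 2 := by
    have := norm_sub_le (T B) (T A)
    rw [hT1, hT1] at this; linarith
  rw [hCK]
  linarith

end unitspeed

lemma setLIntegral_periodic (f : ℝ → ℝ≥0∞) (hf : Function.Periodic f 1) (a : ℝ) :
    ∫⁻ x in I01, f x = ∫⁻ x in Ioc a (a + 1), f x := by
  have h1 : ∫⁻ x in I01, f x = ∫⁻ x in Ioc (0 : ℝ) (0 + 1), f x := by
    unfold I01
    rw [zero_add]
    exact setLIntegral_congr Ico_ae_eq_Ioc
  rw [h1]
  exact (isAddFundamentalDomain_Ioc one_pos 0).setLIntegral_eq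
    (isAddFundamentalDomain_Ioc one_pos a) f hf.map_vadd_zmultiples

lemma transfer (s : ℝ) (hs : 3 / 2 < s) {n : ℕ} (γ : ℝ → En n)
    (hγp : Function.Periodic γ 1) (hγ : ContDiff ℝ 1 γ) (h0 : ∀ x, deriv γ x ≠ 0) (a b : ℝ)
    (hab : a < b) (hb1 : b ≤ a + 1) (hfin : EtpE s γ ≠ ⊤) :
    ‖Dg γ γ b - Dg γ γ a‖ ≤
      Cmor s * √(EtpE s γ).toReal * (∫ t in a..b, ‖deriv γ t‖) ^ (s - 3 / 2) := by
  have hdc : Continuous (deriv γ) := hγ.continuous_deriv le_rfl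
  have hdp : Function.Periodic (deriv γ) 1 := by
    intro x
    rw [← deriv_comp_add_const]
    congr 1; funext y; exact hγp y
  have hnc : Continuous fun t => ‖deriv γ t‖ := hdc.norm
  have hnp : ∀ t, 0 < ‖deriv γ t‖ := fun t => norm_pos_iff.2 (h0 t)
  set S : ℝ → ℝ := fun x => ∫ t in (0 : ℝ)..x, ‖deriv γ t‖ with hS
  have hSd : ∀ x, HasDerivAt S ‖deriv γ x‖ x := fun x =>
    intervalIntegral.integral_hasDerivAt_right (hnc.intervalIntegrable _ _)
      (hnc.stronglyMeasurableAtFilter _ _) hnc.continuousAt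
  have hSm : StrictMono S := strictMono_of_deriv_pos fun x => by rw [(hSd x).deriv]; exact hnp x
  have hSc : Continuous S := continuous_iff_continuousAt.2 fun x => (hSd x).continuousAt
  -- lower bound on speed
  obtain ⟨m, hm0, hm⟩ : ∃ m : ℝ, 0 < m ∧ ∀ t, m ≤ ‖deriv γ t‖ := by
    obtain ⟨t0, _, ht0⟩ := isCompact_Icc.exists_isMinOn (s := Icc (0 : ℝ) 1) ⟨0, by simp⟩
      hnc.continuousOn
    refine ⟨_, hnp t0, fun t => ?_⟩
    obtain ⟨y, hy, hty⟩ := hdp.exists_mem_Ico₀ one_pos t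
    rw [hty]
    exact ht0 (Ico_subset_Icc_self hy)
  have hgrow : ∀ x y, x ≤ y → m * (y - x) ≤ S y - S x := fun x y hxy =>
    Convex.mul_sub_le_image_sub_of_le_deriv convex_univ hSc.continuousOn
      (fun x _ => (hSd x).differentiableAt.differentiableWithinAt)
      (fun x _ => by rw [(hSd x).deriv]; exact hm x) x (mem_univ _) y (mem_univ _) hxy
  have hS0 : S 0 = 0 := by simp [hS]
  have hSsurj : Function.Surjective S := by
    refine hSc.surjective ?_ ?_
    · refine tendsto_atTop_mono' atTop ?_ (tendsto_id.const_mul_atTop hm0)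
      filter_upwards [eventually_ge_atTop 0] with x hx
      have := hgrow 0 x hx
      rw [hS0] at this; simpa using this
    · refine tendsto_atBot_mono' atBot ?_ (tendsto_id.const_mul_atBot hm0)
      filter_upwards [eventually_le_atBot 0] with x hx
      have := hgrow x 0 hx
      rw [hS0] at this; simp only [id]; linarith
  set Φ := hSm.orderIsoOfSurjective S hSsurj with hΦ
  set σ : ℝ → ℝ := fun u => Φ.symm u with hσ
  have hSσ : ∀ u, S (σ u) = u := fun u => Φ.apply_symm_apply u
  have hσS : ∀ x, σ (S x) = x := fun x => Φ.symm_apply_apply x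
  have hσc : Continuous σ := Φ.symm.continuous
  have hσd : ∀ u, HasDerivAt σ (‖deriv γ (σ u)‖)⁻¹ u := fun u =>
    HasDerivAt.of_local_left_inverse hσc.continuousAt (hSd (σ u)) (hnp _).ne'
      (Eventually.of_forall hSσ)
  set c : ℝ → En n := fun u => γ (σ u) with hcdef
  set T : ℝ → En n := fun u => Dg γ γ (σ u) with hTdef
  have hγd : ∀ x, HasDerivAt γ (deriv γ x) x := fun x =>
    (hγ.differentiable one_ne_zero x).hasDerivAt
  have hc : ∀ u, HasDerivAt c (T u) u := fun u => (hγd (σ u)).scomp u (hσd u)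
  have hDc : Continuous (Dg γ γ) := by
    unfold Dg
    exact (hnc.inv₀ fun t => (hnp t).ne').smul hdc
  have hTc : Continuous T := hDc.comp hσc
  have hT1 : ∀ u, ‖T u‖ = 1 := fun u => by
    simp only [hTdef, Dg, norm_smul, norm_inv, norm_norm]
    exact inv_mul_cancel₀ (hnp _).ne'
  have himg : S '' Ioc a b = Ioc (S a) (S b) := by
    have := Φ.image_Ioc a b
    exact this
  have hcv : ∀ g : ℝ → ℝ≥0∞, ∫⁻ u in Ioc (S a) (S b), g u =
      ∫⁻ x in Ioc a b, ENNReal.ofReal ‖deriv γ x‖ * g (S x) := fun g => by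
    rw [← himg, lintegral_image_eq_lintegral_abs_deriv_mul measurableSet_Ioc
      (fun x _ => (hSd x).hasDerivWithinAt) hSm.injective.injOn]
    simp only [abs_norm]
  have hker : ∀ x y, ENNReal.ofReal ‖deriv γ x‖ * (ENNReal.ofReal ‖deriv γ y‖ *
      Gker s c T (S x) (S y)) = ENNReal.ofReal (‖Rop s γ γ x y‖ ^ 2 * muW γ x y) := by
    intro x y
    unfold Gker
    rw [← ENNReal.ofReal_mul (norm_nonneg _), ← ENNReal.ofReal_mul (norm_nonneg _)]
    congr 1
    simp only [hcdef, hTdef, hσS]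
    have e1 : ⟪Dg γ γ x, γ y - γ x⟫ • Dg γ γ x = DDg γ γ x (γ y - γ x) := by
      unfold Dg DDg
      rw [real_inner_smul_left, smul_smul]
      congr 1; ring
    rw [e1]
    unfold Rop muW
    rw [norm_smul, mul_pow]
    by_cases hz : γ y - γ x = 0
    · have : DDg γ γ x 0 = 0 := by simp [DDg]
      rw [hz, this]; simp
    have hp : 0 < ‖γ y - γ x‖ := norm_pos_iff.2 hz
    have e2 : ‖γ y - γ x‖ ^ (2 * s + 1) = (‖γ y - γ x‖ ^ s) ^ 2 * ‖γ y - γ x‖ := by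
      rw [Real.rpow_add_one hp.ne', mul_comm 2 s, Real.rpow_mul hp.le, Real.rpow_two]
    rw [e2, norm_inv, Real.norm_of_nonneg (by positivity)]
    field_simp
  have hE : ∫⁻ u in Ioc (S a) (S b), ∫⁻ t in Ioc (S a) (S b), Gker s c T u t ≤
      ENNReal.ofReal (EtpE s γ).toReal := by
    rw [ENNReal.ofReal_toReal hfin, hcv]
    have hEq : EtpE s γ = ∫⁻ x in Ioc a (a + 1), ∫⁻ y in Ioc a (a + 1),
        ENNReal.ofReal (‖Rop s γ γ x y‖ ^ 2 * muW γ x y) := by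
      unfold EtpE
      rw [setLIntegral_periodic _ _ a]
      · refine lintegral_congr fun x => setLIntegral_periodic _ ?_ a
        intro y
        simp only [Rop, muW, DDg, hγp y, hdp y]
      · intro x
        simp only [Rop, muW, DDg, hγp x, hdp x]
    rw [hEq]
    have hsub : Ioc a b ⊆ Ioc a (a + 1) := Ioc_subset_Ioc le_rfl hb1
    refine le_trans ?_ (lintegral_mono_set hsub)
    refine lintegral_mono fun x => ?_
    refine le_trans (le_of_eq ?_) (lintegral_mono_set hsub)
    rw [hcv, ← lintegral_const_mul' _ _ ENNReal.ofReal_ne_top]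
    exact lintegral_congr fun y => hker x y
  have := unit_speed s hs c T hc hTc hT1 (S a) (S b) (hSm hab) _ ENNReal.toReal_nonneg hE
  have hint : S b - S a = ∫ t in a..b, ‖deriv γ t‖ :=
    intervalIntegral.integral_interval_sub_left (hnc.intervalIntegrable _ _)
      (hnc.intervalIntegrable _ _)
  simpa only [hTdef, hσS, hint] using this

lemma arcDist_attained {n : ℕ} (γ : ℝ → En n) (hγ : ContDiff ℝ 1 γ) (x y : ℝ) :
    ∃ k : ℤ, |y + k - x| ≤ 1 ∧ |∫ t in x..(y + (k : ℝ)), ‖deriv γ t‖| ≤ arcDist γ x y := by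
  have hnc : Continuous fun t => ‖deriv γ t‖ := (hγ.continuous_deriv le_rfl).norm
  have hmono : ∀ p q r : ℝ, p ≤ q → q ≤ r →
      |∫ t in p..q, ‖deriv γ t‖| ≤ |∫ t in p..r, ‖deriv γ t‖| := by
    intro p q r hpq hqr
    have h1 : 0 ≤ ∫ t in p..q, ‖deriv γ t‖ :=
      intervalIntegral.integral_nonneg hpq fun _ _ => norm_nonneg _
    have h2 : 0 ≤ ∫ t in q..r, ‖deriv γ t‖ :=
      intervalIntegral.integral_nonneg hqr fun _ _ => norm_nonneg _
    have h3 := intervalIntegral.integral_add_adjacent_intervals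
      (hnc.intervalIntegrable (μ := volume) p q) (hnc.intervalIntegrable (μ := volume) q r)
    rw [abs_of_nonneg h1, abs_of_nonneg (by linarith)]; linarith
  have hmono' : ∀ p q r : ℝ, q ≤ p → r ≤ q →
      |∫ t in p..q, ‖deriv γ t‖| ≤ |∫ t in p..r, ‖deriv γ t‖| := by
    intro p q r hpq hqr
    rw [intervalIntegral.integral_symm q p, intervalIntegral.integral_symm r p, abs_neg, abs_neg]
    have h1 : 0 ≤ ∫ t in q..p, ‖deriv γ t‖ :=
      intervalIntegral.integral_nonneg hpq fun _ _ => norm_nonneg _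
    have h2 : 0 ≤ ∫ t in r..q, ‖deriv γ t‖ :=
      intervalIntegral.integral_nonneg hqr fun _ _ => norm_nonneg _
    have h3 := intervalIntegral.integral_add_adjacent_intervals
      (hnc.intervalIntegrable (μ := volume) r q) (hnc.intervalIntegrable (μ := volume) q p)
    rw [abs_of_nonneg h1, abs_of_nonneg (by linarith)]; linarith
  set j : ℤ := ⌈x - y⌉ with hj
  have hj1 : x - y ≤ j := Int.le_ceil _
  have hj2 : (j : ℝ) < x - y + 1 := Int.ceil_lt_add_one _
  have hA : ∀ m : ℤ, j ≤ m → |∫ t in x..(y + (j : ℝ)), ‖deriv γ t‖| ≤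
      |∫ t in x..(y + (m : ℝ)), ‖deriv γ t‖| := fun m hm => by
    have : (j : ℝ) ≤ m := by exact_mod_cast hm
    exact hmono _ _ _ (by linarith) (by linarith)
  have hB : ∀ m : ℤ, m < j → |∫ t in x..(y + ((j - 1 : ℤ) : ℝ)), ‖deriv γ t‖| ≤
      |∫ t in x..(y + (m : ℝ)), ‖deriv γ t‖| := fun m hm => by
    have : (m : ℝ) ≤ (j - 1 : ℤ) := by exact_mod_cast Int.le_sub_one_of_lt hm
    refine hmono' _ _ _ (by push_cast; linarith) (by linarith)
  unfold arcDist
  rcases le_total (|∫ t in x..(y + (j : ℝ)), ‖deriv γ t‖|)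
    (|∫ t in x..(y + ((j - 1 : ℤ) : ℝ)), ‖deriv γ t‖|) with h | h
  · refine ⟨j, by rw [abs_le]; constructor <;> linarith, le_ciInf fun m => ?_⟩
    rcases le_or_gt j m with hm | hm
    · exact hA m hm
    · exact h.trans (hB m hm)
  · refine ⟨j - 1, by rw [abs_le]; push_cast; constructor <;> linarith, le_ciInf fun m => ?_⟩
    rcases le_or_gt j m with hm | hm
    · exact h.trans (hA m hm)
    · exact hB m hm

lemma morrey_lift (s : ℝ) (hs : 3 / 2 < s) {n : ℕ} (γ : ℝ → En n)
    (hγp : Function.Periodic γ 1) (hγ : ContDiff ℝ 1 γ) (h0 : ∀ x, deriv γ x ≠ 0) (a b : ℝ)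
    (hab : a ≤ b) (hb1 : b ≤ a + 1) :
    ENNReal.ofReal ‖Dg γ γ b - Dg γ γ a‖ ≤
      ENNReal.ofReal (Cmor s) * EtpE s γ ^ ((1 : ℝ) / 2) *
        ENNReal.ofReal ((∫ t in a..b, ‖deriv γ t‖) ^ (s - 3 / 2)) := by
  rcases hab.eq_or_lt with rfl | hab
  · simp
  have hdc : Continuous (deriv γ) := hγ.continuous_deriv le_rfl
  have hpos : 0 < ∫ t in a..b, ‖deriv γ t‖ :=
    intervalIntegral.intervalIntegral_pos_of_pos (hdc.norm.intervalIntegrable _ _)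
      (fun t => norm_pos_iff.2 (h0 t)) hab
  have hC := Cmor_pos s hs
  by_cases hfin : EtpE s γ = ⊤
  · rw [hfin, ENNReal.top_rpow_of_pos (by norm_num), ENNReal.mul_top (by simpa using hC),
      ENNReal.top_mul (by simpa using Real.rpow_pos_of_pos hpos _)]
    exact le_top
  have := transfer s hs γ hγp hγ h0 a b hab hb1 hfin
  refine (ENNReal.ofReal_le_ofReal this).trans (le_of_eq ?_)
  rw [ENNReal.ofReal_mul (by positivity), ENNReal.ofReal_mul hC.le]
  congr 2
  rw [Real.sqrt_eq_rpow, ← ENNReal.ofReal_rpow_of_nonneg ENNReal.toReal_nonneg (by norm_num),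
    ENNReal.ofReal_toReal hfin]

/-- geometric Morrey inequality: for `s ∈ (3/2,2)` and `α = s - 3/2`
there is `C ≥ 0`, depending only on `s`, such that every injective `C¹` immersion
`γ : 𝕋 → ℝⁿ` satisfies `|D_γγ(y) − D_γγ(x)| ≤ C·√(E(γ))·d_γ(x,y)^α` for all `x, y`. -/
theorem statement1 (s : ℝ) (hs : s ∈ Set.Ioo (3 / 2 : ℝ) 2) :
    ∃ C : ℝ, 0 ≤ C ∧ ∀ (n : ℕ), 2 ≤ n → ∀ γ : ℝ → En n,
      Function.Periodic γ 1 → ContDiff ℝ 1 γ → Set.InjOn γ I01 → (∀ x, deriv γ x ≠ 0) →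
      ∀ x y : ℝ,
        ENNReal.ofReal ‖Dg γ γ y - Dg γ γ x‖ ≤
          ENNReal.ofReal C * EtpE s γ ^ ((1 : ℝ) / 2) *
            ENNReal.ofReal (arcDist γ x y ^ (s - 3 / 2)) := by
  refine ⟨Cmor s, (Cmor_pos s hs.1).le, ?_⟩
  intro n _ γ hγp hγ _ h0 x y
  obtain ⟨k, hk1, hk⟩ := arcDist_attained γ hγ x y
  have hdp : Function.Periodic (deriv γ) 1 := by
    intro x
    rw [← deriv_comp_add_const]
    congr 1; funext y; exact hγp y
  have hD : Dg γ γ (y + k) = Dg γ γ y := by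
    have : deriv γ (y + k) = deriv γ y := by simpa using hdp.int_mul k y
    simp only [Dg, this]
  have hk1' := abs_le.1 hk1
  have hα : 0 ≤ s - 3 / 2 := by linarith [hs.1]
  suffices h : ENNReal.ofReal ‖Dg γ γ (y + k) - Dg γ γ x‖ ≤
      ENNReal.ofReal (Cmor s) * EtpE s γ ^ ((1 : ℝ) / 2) *
        ENNReal.ofReal (|∫ t in x..(y + (k : ℝ)), ‖deriv γ t‖| ^ (s - 3 / 2)) by
    rw [hD] at h
    refine h.trans ?_
    gcongr
  rcases le_total x (y + k) with hxy | hxy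
  · rw [abs_of_nonneg (intervalIntegral.integral_nonneg hxy fun _ _ => norm_nonneg _)]
    exact morrey_lift s hs.1 γ hγp hγ h0 _ _ hxy (by linarith)
  · rw [intervalIntegral.integral_symm, abs_neg, norm_sub_rev,
      abs_of_nonneg (intervalIntegral.integral_nonneg hxy fun _ _ => norm_nonneg _)]
    exact morrey_lift s hs.1 γ hγp hγ h0 _ _ hxy (by linarith)
end
end

section
/- Let s ∈ (3/2, 2), α = s − 3/2 and β = (α + 1)/(2α²). There is a constant 0 < C < ∞, depending only on s, such that every injective C¹ immersion γ : 𝕋 → ℝⁿ satisfies distor(γ) = sup_{x≠y} d_γ(x,y)/|γ(y)−γ(x)| ≤ C · L(γ)^{(α+1)/α} · E(γ)^β. -/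
open MeasureTheory Real Filter Set
open scoped ENNReal Topology RealInnerProductSpace

noncomputable section

set_option linter.unusedSectionVars false

section core
variable {V : Type*} [NormedAddCommGroup V] [InnerProductSpace ℝ V]

def nN (η τ : ℝ → V) (x y : ℝ) : ℝ := ‖η y - η x - ⟪τ x, η y - η x⟫ • τ x‖
def kK (p : ℝ) (η τ : ℝ → V) (x y : ℝ) : ℝ := nN η τ x y ^ 2 / ‖η y - η x‖ ^ p

def phi (η : ℝ → V) (a h : ℝ) : V := ∫ y in a..(a+h), (η (y+h) - η y)
def vv (η : ℝ → V) (a h : ℝ) : V := ‖phi η a h‖⁻¹ • phi η a h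

lemma dir_close (Φ t : V) (c d : ℝ) (hc : 0 < c) (ht : ‖t‖ = 1) (h : ‖Φ - c • t‖ ≤ d) :
    ‖‖Φ‖⁻¹ • Φ - t‖ ≤ 2 * d / c := by
  have h1 : |‖Φ‖ - c| ≤ d := by
    have := abs_norm_sub_norm_le Φ (c • t)
    rw [norm_smul, ht, Real.norm_of_nonneg hc.le, mul_one] at this
    exact this.trans h
  have h2 : ‖Φ‖ • (‖Φ‖⁻¹ • Φ) = Φ := by
    by_cases hz : Φ = 0
    · simp [hz]
    · rw [smul_smul, mul_inv_cancel₀ (norm_ne_zero_iff.2 hz), one_smul]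
  have h3 : ‖‖Φ‖⁻¹ • Φ‖ ≤ 1 := by
    by_cases hz : Φ = 0
    · simp [hz]
    · rw [norm_smul, norm_inv, norm_norm, inv_mul_cancel₀ (norm_ne_zero_iff.2 hz)]
  have h4 : c • (‖Φ‖⁻¹ • Φ - t) = (Φ - c • t) + (c - ‖Φ‖) • (‖Φ‖⁻¹ • Φ) := by
    rw [sub_smul, h2, smul_sub]; abel
  have h5 : c * ‖‖Φ‖⁻¹ • Φ - t‖ ≤ 2 * d := by
    calc c * ‖‖Φ‖⁻¹ • Φ - t‖ = ‖c • (‖Φ‖⁻¹ • Φ - t)‖ := by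
          rw [norm_smul, Real.norm_of_nonneg hc.le]
      _ ≤ ‖Φ - c • t‖ + ‖(c - ‖Φ‖) • (‖Φ‖⁻¹ • Φ)‖ := by rw [h4]; exact norm_add_le _ _
      _ ≤ d + d * 1 := by
          gcongr
          rw [norm_smul, Real.norm_eq_abs, abs_sub_comm]
          have := norm_nonneg (Φ - c • t)
          gcongr
          linarith
      _ = 2 * d := by ring
  rw [le_div_iff₀ hc]; linarith

lemma chord_close {η τ : ℝ → V} (hd : ∀ t, HasDerivAt η (τ t) t) {u : V} {ε a b : ℝ} (hab : a ≤ b)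
    (ho : ∀ t ∈ Icc a b, ‖τ t - u‖ ≤ ε) : ‖η b - η a - (b - a) • u‖ ≤ ε * (b - a) := by
  have := (convex_Icc a b).norm_image_sub_le_of_norm_hasDerivWithin_le
    (f := fun t => η t - t • u) (f' := fun t => τ t - u) (C := ε) (x := a) (y := b)
    (fun t _ => by
      have := ((hd t).sub ((hasDerivAt_id t).smul_const u)).hasDerivWithinAt (s := Icc a b)
      simpa [Pi.sub_def] using this) ho (left_mem_Icc.2 hab) (right_mem_Icc.2 hab)
  rw [Real.norm_of_nonneg (by linarith : 0 ≤ b - a)] at this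
  convert this using 2
  rw [sub_smul]; abel

lemma lip {η τ : ℝ → V} (hd : ∀ t, HasDerivAt η (τ t) t) (h1 : ∀ t, ‖τ t‖ = 1) (x y : ℝ) :
    ‖η y - η x‖ ≤ |y - x| := by
  have := convex_univ.norm_image_sub_le_of_norm_hasDerivWithin_le
    (f := η) (f' := τ) (C := 1) (x := x) (y := y)
    (fun t _ => (hd t).hasDerivWithinAt (s := univ)) (fun t _ => (h1 t).le) (mem_univ _) (mem_univ _)
  simpa using this

variable [CompleteSpace V]

lemma phi_close {η τ : ℝ → V} (hd : ∀ t, HasDerivAt η (τ t) t) {u : V} {ε a h : ℝ} (hh : 0 ≤ h)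
    (ho : ∀ t ∈ Icc a (a + 2 * h), ‖τ t - u‖ ≤ ε) : ‖phi η a h - (h^2) • u‖ ≤ ε * h ^ 2 := by
  have hc : Continuous η := continuous_iff_continuousAt.2 fun t => (hd t).continuousAt
  have e : phi η a h - (h^2) • u = ∫ y in a..(a+h), (η (y+h) - η y - h • u) := by
    rw [intervalIntegral.integral_sub, phi]
    · rw [intervalIntegral.integral_const, smul_smul]; congr 2; ring
    · exact Continuous.intervalIntegrable (by fun_prop) _ _
    · exact Continuous.intervalIntegrable (by fun_prop) _ _
  rw [e]
  have := intervalIntegral.norm_integral_le_of_norm_le_const (a := a) (b := a + h) (C := ε * h)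
    (f := fun y => (η (y+h) - η y - h • u)) (by
      intro y hy
      rw [uIoc_of_le (by linarith)] at hy
      have := chord_close hd (u := u) (ε := ε) (a := y) (b := y + h) (by linarith)
        (fun t ht => ho t ⟨by linarith [ht.1, hy.1], by linarith [ht.2, hy.2]⟩)
      simpa using this)
  refine this.trans_eq ?_
  rw [add_sub_cancel_left, abs_of_nonneg hh]; ring

lemma nN_cont {η τ : ℝ → V} (hc : Continuous η) (x : ℝ) : Continuous (nN η τ x) := by
  unfold nN; fun_prop

lemma phi_perp {η τ : ℝ → V} (hc : Continuous η) (x a h : ℝ) (hh : 0 ≤ h) :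
    ‖phi η a h - ⟪τ x, phi η a h⟫ • τ x‖ ≤ ∫ y in a..(a + 2 * h), nN η τ x y := by
  let P : V →L[ℝ] V := ContinuousLinearMap.id ℝ V - (innerSL ℝ (τ x)).smulRight (τ x)
  have hP : ∀ w, P w = w - ⟪τ x, w⟫ • τ x := fun w => by simp [P]
  have hN : ∀ y, nN η τ x y = ‖P (η y - η x)‖ := fun y => by rw [hP]; rfl
  have hcN := nN_cont (τ := τ) hc x
  have hi : ∀ u v, IntervalIntegrable (nN η τ x) volume u v := fun u v => hcN.intervalIntegrable _ _
  rw [← hP, phi, ← P.intervalIntegral_comp_comm (Continuous.intervalIntegrable (by fun_prop) _ _)]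
  have h1 : ∫ y in a..(a + 2 * h), nN η τ x y = ∫ y in a..(a+h), (nN η τ x (y + h) + nN η τ x y) := by
    rw [intervalIntegral.integral_add (Continuous.intervalIntegrable (by fun_prop) _ _) (hi _ _),
      intervalIntegral.integral_comp_add_right (fun y => nN η τ x y), add_comm (∫ y in (a+h)..(a+h+h), nN η τ x y),
      intervalIntegral.integral_add_adjacent_intervals (hi _ _) (hi _ _)]
    congr 1; ring
  rw [h1]
  refine intervalIntegral.norm_integral_le_of_norm_le (by linarith) ?_ (Continuous.intervalIntegrable (by fun_prop) _ _)
  refine Eventually.of_forall fun y _ => ?_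
  rw [hN, hN]
  have : P (η (y + h) - η y) = P (η (y+h) - η x) - P (η y - η x) := by
    rw [← map_sub]; congr 1; abel
  rw [this]; exact norm_sub_le _ _


lemma pick_point {F : ℝ → ℝ≥0∞} {a b a' h E : ℝ} (hh : 0 < h) (hE : 0 < E) (h1 : a ≤ a') (h2 : a' + h ≤ b)
    (hen : ∫⁻ x in Icc a b, F x ≤ ENNReal.ofReal E) :
    ∃ x ∈ Icc a' (a' + h), F x ≤ ENNReal.ofReal (2 * E / h) := by
  by_contra! hcon
  have : ENNReal.ofReal (2 * E / h) * volume (Icc a' (a' + h)) ≤ ENNReal.ofReal E := by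
    rw [← setLIntegral_const]
    refine le_trans ?_ hen
    refine le_trans (setLIntegral_mono' measurableSet_Icc fun x hx => (hcon x hx).le) ?_
    exact lintegral_mono_set (Icc_subset_Icc h1 h2)
  rw [Real.volume_Icc, add_sub_cancel_left, ← ENNReal.ofReal_mul (by positivity),
    ENNReal.ofReal_le_ofReal_iff hE.le] at this
  field_simp at this
  linarith

lemma nN_sq_le {p : ℝ} (hp : 0 ≤ p) {η τ : ℝ → V} (hd : ∀ t, HasDerivAt η (τ t) t) (h1 : ∀ t, ‖τ t‖ = 1)
    {x y ρ : ℝ} (hxy : |y - x| ≤ ρ) : nN η τ x y ^ 2 ≤ ρ ^ p * kK p η τ x y := by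
  have h0 : ‖η y - η x‖ ≤ ρ := (lip hd h1 x y).trans hxy
  unfold kK
  rcases eq_or_lt_of_le (norm_nonneg (η y - η x)) with h | h
  · have h' : η y - η x = 0 := norm_eq_zero.1 h.symm
    simp [nN, h']
  · have hr : 0 < ‖η y - η x‖ ^ p := Real.rpow_pos_of_pos h p
    have : ‖η y - η x‖ ^ p ≤ ρ ^ p := Real.rpow_le_rpow h.le h0 hp
    rw [mul_div_assoc', le_div_iff₀ hr, mul_comm]
    gcongr

lemma nN_int {α : ℝ} (hα : 0 < α) {η τ : ℝ → V} (hd : ∀ t, HasDerivAt η (τ t) t) (h1 : ∀ t, ‖τ t‖ = 1)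
    {a ρ x E : ℝ} (hρ : 0 < ρ) (hE : 0 < E) (hx : x ∈ Icc a (a + ρ))
    (hen : ∫⁻ y in Icc a (a + ρ), ENNReal.ofReal (kK (2 * α + 4) η τ x y) ≤ ENNReal.ofReal (4 * E / ρ)) :
    ∫ y in a..(a + ρ), nN η τ x y ≤ 2 * √E * ρ ^ α * ρ ^ 2 := by
  have hc : Continuous η := continuous_iff_continuousAt.2 fun t => (hd t).continuousAt
  have hcN := nN_cont (τ := τ) hc x
  set p := 2 * α + 4 with hp
  have hρp : 0 < ρ ^ p := Real.rpow_pos_of_pos hρ p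
  have hρα : 0 < ρ ^ α := Real.rpow_pos_of_pos hρ α
  have hpe : ρ ^ p = (ρ ^ α) ^ 2 * ρ ^ 4 := by
    rw [hp, Real.rpow_add hρ, mul_comm 2 α, Real.rpow_mul hρ.le]; norm_cast
  have i2 : ∫ y in a..(a + ρ), nN η τ x y ^ 2 ≤ 4 * E * (ρ ^ α) ^ 2 * ρ ^ 3 := by
    rw [intervalIntegral.integral_of_le (by linarith), ← integral_Icc_eq_integral_Ioc,
      integral_eq_lintegral_of_nonneg_ae (Eventually.of_forall fun y => sq_nonneg _)
        (hcN.pow 2).aestronglyMeasurable]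
    refine ENNReal.toReal_le_of_le_ofReal (by positivity) ?_
    calc ∫⁻ y in Icc a (a+ρ), ENNReal.ofReal (nN η τ x y ^ 2)
        ≤ ∫⁻ y in Icc a (a+ρ), ENNReal.ofReal (ρ ^ p) * ENNReal.ofReal (kK p η τ x y) := by
          refine setLIntegral_mono' measurableSet_Icc fun y hy => ?_
          rw [← ENNReal.ofReal_mul hρp.le]
          refine ENNReal.ofReal_le_ofReal (nN_sq_le (by linarith) hd h1 ?_)
          rw [abs_le]; constructor <;> linarith [hx.1, hx.2, hy.1, hy.2]
      _ = ENNReal.ofReal (ρ ^ p) * ∫⁻ y in Icc a (a+ρ), ENNReal.ofReal (kK p η τ x y) :=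
          lintegral_const_mul' _ _ ENNReal.ofReal_ne_top
      _ ≤ ENNReal.ofReal (ρ ^ p) * ENNReal.ofReal (4 * E / ρ) := by gcongr
      _ = ENNReal.ofReal (4 * E * (ρ ^ α) ^ 2 * ρ ^ 3) := by
          rw [← ENNReal.ofReal_mul hρp.le, hpe]; congr 1; field_simp
  have hsE : 0 < √E := Real.sqrt_pos.2 hE
  set l := 2 * √E * ρ ^ α * ρ with hl
  have hlp : 0 < l := by positivity
  have i1 : ∫ y in a..(a + ρ), nN η τ x y ≤ ∫ y in a..(a+ρ), ((2 * l)⁻¹ * nN η τ x y ^ 2 + l / 2) := by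
    refine intervalIntegral.integral_mono_on (by linarith) (hcN.intervalIntegrable _ _)
      (Continuous.intervalIntegrable (by fun_prop) _ _) fun y _ => ?_
    have : 0 ≤ (nN η τ x y - l) ^ 2 := sq_nonneg _
    have e : (2 * l)⁻¹ * nN η τ x y ^ 2 + l / 2 - nN η τ x y = (2 * l)⁻¹ * (nN η τ x y - l) ^ 2 := by
      field_simp; ring
    have : 0 ≤ (2 * l)⁻¹ * (nN η τ x y - l) ^ 2 := by positivity
    linarith
  refine i1.trans ?_
  rw [intervalIntegral.integral_add (Continuous.intervalIntegrable (by fun_prop) _ _)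
    (Continuous.intervalIntegrable (by fun_prop) _ _), intervalIntegral.integral_const_mul,
    intervalIntegral.integral_const, add_sub_cancel_left, smul_eq_mul]
  calc _ ≤ (2 * l)⁻¹ * (4 * E * (ρ ^ α) ^ 2 * ρ ^ 3) + ρ * (l / 2) := by gcongr
    _ = (2 * l)⁻¹ * (l ^ 2 * ρ) + ρ * (l / 2) := by
        congr 2; rw [hl]; nth_rewrite 1 [← Real.sq_sqrt hE.le]; ring
    _ = l * ρ := by field_simp; ring
    _ = _ := by rw [hl]; ring

lemma vv_close {η τ : ℝ → V} (hd : ∀ t, HasDerivAt η (τ t) t) (h1 : ∀ t, ‖τ t‖ = 1)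
    {x a h D : ℝ} (hh : 0 < h) (ho : ∀ t ∈ Icc a (a + 2 * h), ‖τ t - τ x‖ ≤ 1 / 2)
    (hD : ∫ y in a..(a + 2 * h), nN η τ x y ≤ D) :
    ‖vv η a h - τ x‖ ≤ 4 * D / h ^ 2 := by
  have hc : Continuous η := continuous_iff_continuousAt.2 fun t => (hd t).continuousAt
  have p1 := phi_close hd hh.le ho
  have p2 := (phi_perp (τ := τ) hc x a h hh.le).trans hD
  have p3 : h ^ 2 / 2 ≤ ⟪τ x, phi η a h⟫ := by
    have e1 : ⟪τ x, phi η a h⟫ = h ^ 2 + ⟪τ x, phi η a h - h ^ 2 • τ x⟫ := by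
      rw [inner_sub_right, inner_smul_right, real_inner_self_eq_norm_sq, h1]; ring
    have e2 := abs_real_inner_le_norm (τ x) (phi η a h - h ^ 2 • τ x)
    rw [h1, one_mul, abs_le] at e2
    linarith [e2.1]
  have hD0 : 0 ≤ D := (norm_nonneg _).trans p2
  have hh2 : 0 < h ^ 2 / 2 := by positivity
  have := dir_close _ _ _ _ (hh2.trans_le p3) (h1 x) p2
  refine this.trans ?_
  calc 2 * D / ⟪τ x, phi η a h⟫ ≤ 2 * D / (h ^ 2 / 2) := by gcongr
    _ = _ := by field_simp; ring

lemma step_s2 {α : ℝ} (hα : 0 < α) {η τ : ℝ → V} (hd : ∀ t, HasDerivAt η (τ t) t) (h1 : ∀ t, ‖τ t‖ = 1)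
    {a h a' E : ℝ} (hh : 0 < h) (hE : 0 < E) (ha : a ≤ a') (ha' : a' + h ≤ a + 2 * h)
    (ho : ∀ x ∈ Icc a (a + 2 * h), ∀ y ∈ Icc a (a + 2 * h), ‖τ y - τ x‖ ≤ 1 / 2)
    (hen : ∫⁻ x in Icc a (a + 2 * h), ∫⁻ y in Icc a (a + 2 * h),
      ENNReal.ofReal (kK (2 * α + 4) η τ x y) ≤ ENNReal.ofReal E) :
    ‖vv η a h - vv η a' (h / 2)‖ ≤ 160 * √E * (2 * h) ^ α := by
  have hc : Continuous η := continuous_iff_continuousAt.2 fun t => (hd t).continuousAt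
  obtain ⟨x, hx, hF⟩ := pick_point hh hE ha ha' hen
  have hx' : x ∈ Icc a (a + 2 * h) := ⟨ha.trans hx.1, hx.2.trans ha'⟩
  have hI := nN_int hα hd h1 (ρ := 2 * h) (by positivity) hE hx' (hF.trans_eq (by congr 1; field_simp; norm_num))
  have hcN := nN_cont (τ := τ) hc x
  have hI' : ∫ y in a'..(a' + 2 * (h / 2)), nN η τ x y ≤ 2 * √E * (2 * h) ^ α * (2 * h) ^ 2 := by
    refine le_trans ?_ hI
    refine intervalIntegral.integral_mono_interval ha (by linarith) (by linarith)
      (Eventually.of_forall fun y => norm_nonneg _) (hcN.intervalIntegrable _ _)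
  have v1 := vv_close hd h1 hh (fun t ht => ho x hx' t ht) hI
  have v2 := vv_close hd h1 (half_pos hh) (fun t ht => ho x hx' t
    ⟨by linarith [ht.1], by linarith [ht.2]⟩) hI'
  calc _ = ‖(vv η a h - τ x) - (vv η a' (h/2) - τ x)‖ := by congr 1; abel
    _ ≤ _ := norm_sub_le _ _
    _ ≤ _ := add_le_add v1 v2
    _ = _ := by field_simp; ring

lemma chain {α : ℝ} (hα : 0 < α) {η τ : ℝ → V} (hd : ∀ t, HasDerivAt η (τ t) t) (h1 : ∀ t, ‖τ t‖ = 1)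
    (hτ : Continuous τ) {p θ h E : ℝ} (hh : 0 < h) (hE : 0 < E) (hθ0 : 0 ≤ θ) (hθ1 : θ ≤ 1)
    (ho : ∀ x ∈ Icc (p - 2 * θ * h) (p - 2 * θ * h + 2 * h),
      ∀ y ∈ Icc (p - 2 * θ * h) (p - 2 * θ * h + 2 * h), ‖τ y - τ x‖ ≤ 1 / 2)
    (hen : ∫⁻ x in Icc (p - 2 * θ * h) (p - 2 * θ * h + 2 * h),
      ∫⁻ y in Icc (p - 2 * θ * h) (p - 2 * θ * h + 2 * h),
      ENNReal.ofReal (kK (2 * α + 4) η τ x y) ≤ ENNReal.ofReal E) :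
    ‖vv η (p - 2 * θ * h) h - τ p‖ ≤ 160 * √E * (2 * h) ^ α / (1 - (1 / 2 : ℝ) ^ α) := by
  set q : ℝ := (1 / 2 : ℝ) ^ α with hq
  have hq1 : q < 1 := Real.rpow_lt_one (by norm_num) (by norm_num) hα
  let H : ℕ → ℝ := fun k => h * (1 / 2) ^ k
  have hHp : ∀ k, 0 < H k := fun k => by positivity
  have hHle : ∀ k, H k ≤ h := fun k => by
    have : (1 / 2 : ℝ) ^ k ≤ 1 := pow_le_one₀ (by norm_num) (by norm_num)
    simp only [H]; nlinarith
  have hHs : ∀ k, H (k + 1) = H k / 2 := fun k => by simp only [H, pow_succ]; ring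
  have hsub : ∀ k, Icc (p - 2 * θ * H k) (p - 2 * θ * H k + 2 * H k) ⊆
      Icc (p - 2 * θ * h) (p - 2 * θ * h + 2 * h) := fun k => by
    apply Icc_subset_Icc
    · nlinarith [hHle k]
    · nlinarith [hHle k]
  have hstep : ∀ k, dist (vv η (p - 2 * θ * H k) (H k)) (vv η (p - 2 * θ * H (k+1)) (H (k+1)))
      ≤ (160 * √E * (2 * h) ^ α) * q ^ k := fun k => by
    rw [dist_eq_norm]
    have := step_s2 hα hd h1 (a := p - 2 * θ * H k) (a' := p - 2 * θ * H (k+1)) (hHp k) hE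
      (by rw [hHs]; nlinarith [hHp k]) (by rw [hHs]; nlinarith [hHp k])
      (fun x hx y hy => ho x (hsub k hx) y (hsub k hy))
      (le_trans ((lintegral_mono_set (hsub k)).trans
        (lintegral_mono fun x => lintegral_mono_set (hsub k))) hen)
    rw [← hHs] at this
    refine this.trans_eq ?_
    have : (2 * H k) ^ α = (2 * h) ^ α * q ^ k := by
      simp only [H]
      rw [← mul_assoc, Real.mul_rpow (by positivity) (by positivity), hq, ← Real.rpow_natCast,
        ← Real.rpow_natCast, ← Real.rpow_mul (by positivity), ← Real.rpow_mul (by positivity), mul_comm α]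
    rw [this]; ring
  have hlim : Tendsto (fun k => vv η (p - 2 * θ * H k) (H k)) atTop (𝓝 (τ p)) := by
    rw [Metric.tendsto_atTop]
    intro ε hε
    obtain ⟨δ, hδ, hδ'⟩ := Metric.continuousAt_iff.1 (hτ.continuousAt (x := p)) (ε / 4) (by positivity)
    have hH0 : Tendsto H atTop (𝓝 0) := by
      have := (tendsto_pow_atTop_nhds_zero_of_lt_one (r := (1/2 : ℝ)) (by norm_num) (by norm_num)).const_mul h
      simpa [H] using this
    obtain ⟨N, hN⟩ := Metric.tendsto_atTop.1 hH0 (δ / 2) (by positivity)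
    refine ⟨N, fun k hk => ?_⟩
    have hk' := hN k hk
    rw [Real.dist_eq, sub_zero, abs_of_pos (hHp k)] at hk'
    have pc := phi_close hd (u := τ p) (ε := ε / 4) (a := p - 2 * θ * H k) (h := H k) (hHp k).le
      (fun t ht => by
        rw [← dist_eq_norm]
        refine (hδ' ?_).le
        rw [Real.dist_eq, abs_lt]
        constructor <;> nlinarith [ht.1, ht.2, hHp k])
    have := dir_close _ _ _ _ (pow_pos (hHp k) 2) (h1 p) pc
    rw [dist_eq_norm]
    refine lt_of_le_of_lt this ?_
    have := hHp k
    field_simp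
    linarith
  have := dist_le_of_le_geometric_of_tendsto₀ q _ hq1 hstep hlim
  rw [dist_eq_norm] at this
  simpa [H] using this

def cK (α : ℝ) : ℝ := 320 / (1 - (1 / 2 : ℝ) ^ α)

lemma cK_ge {α : ℝ} (hα : 0 < α) : 320 ≤ cK α := by
  have hq1 : (1/2 : ℝ) ^ α < 1 := Real.rpow_lt_one (by norm_num) (by norm_num) hα
  have hq0 : 0 < (1/2 : ℝ) ^ α := by positivity
  unfold cK
  rw [le_div_iff₀ (by linarith)]
  linarith

lemma local_osc {α : ℝ} (hα : 0 < α) {η τ : ℝ → V} (hd : ∀ t, HasDerivAt η (τ t) t) (h1 : ∀ t, ‖τ t‖ = 1)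
    (hτ : Continuous τ) {a r E : ℝ} (hr : 0 < r) (hE : 0 < E)
    (hen : ∫⁻ x in Icc a (a + r), ∫⁻ y in Icc a (a + r),
      ENNReal.ofReal (kK (2 * α + 4) η τ x y) ≤ ENNReal.ofReal E)
    (hK : cK α * √E * r ^ α < 1 / 4) :
    ∀ x ∈ Icc a (a + r), ∀ y ∈ Icc a (a + r), ‖τ y - τ x‖ ≤ 1 / 4 := by
  by_contra! hcon
  let S : Set (ℝ × ℝ) := (Icc a (a + r) ×ˢ Icc a (a + r)) ∩ {z | 1 / 4 ≤ ‖τ z.2 - τ z.1‖}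
  have hS : IsCompact S := (isCompact_Icc.prod isCompact_Icc).inter_right
    (isClosed_le continuous_const (by fun_prop))
  obtain ⟨x0, hx0, y0, hy0, h0⟩ := hcon
  obtain ⟨⟨x, y⟩, ⟨⟨hx, hy⟩, hxy⟩, hmin⟩ := hS.exists_isMinOn (f := fun z : ℝ × ℝ => |z.2 - z.1|)
    ⟨(x0, y0), ⟨⟨hx0, hy0⟩, h0.le⟩⟩ (by fun_prop)
  simp only [mem_ofPred_eq] at hx hy hxy
  have key : ∀ x y, x ∈ Icc a (a + r) → y ∈ Icc a (a+r) → x < y → 1 / 4 ≤ ‖τ y - τ x‖ →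
      (∀ u ∈ Icc a (a+r), ∀ v ∈ Icc a (a+r), 1/4 ≤ ‖τ v - τ u‖ → y - x ≤ |v - u|) → False := by
    intro x y hx hy hlt hxy hm
    have hsub : Icc x y ⊆ Icc a (a + r) := Icc_subset_Icc hx.1 hy.2
    have hmid : (x + y) / 2 ∈ Icc a (a+r) := hsub ⟨by linarith, by linarith⟩
    have hc1 : ∀ u ∈ Icc x y, ‖τ ((x+y)/2) - τ u‖ ≤ 1 / 4 := fun u hu => by
      by_contra! hc
      have := hm u (hsub hu) _ hmid hc.le
      have h2 : |(x+y)/2 - u| ≤ (y - x) / 2 := by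
        rw [abs_le]; constructor <;> linarith [hu.1, hu.2]
      linarith
    have ho : ∀ u ∈ Icc x y, ∀ v ∈ Icc x y, ‖τ v - τ u‖ ≤ 1 / 2 := fun u hu v hv => by
      have : τ v - τ u = (τ ((x+y)/2) - τ u) - (τ ((x+y)/2) - τ v) := by abel
      rw [this]
      linarith [norm_sub_le (τ ((x+y)/2) - τ u) (τ ((x+y)/2) - τ v), hc1 u hu, hc1 v hv]
    have hen' : ∫⁻ u in Icc x y, ∫⁻ v in Icc x y,
      ENNReal.ofReal (kK (2 * α + 4) η τ u v) ≤ ENNReal.ofReal E :=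
      le_trans ((lintegral_mono_set hsub).trans
        (lintegral_mono fun x => lintegral_mono_set hsub)) hen
    obtain ⟨h, hh⟩ : ∃ h, h = (y - x) / 2 := ⟨_, rfl⟩
    have hhp : 0 < h := by rw [hh]; linarith
    have e1 : x - 2 * 0 * h = x := by ring
    have e2 : y - 2 * 1 * h = x := by rw [hh]; ring
    have e3 : x + 2 * h = y := by rw [hh]; ring
    have c1 := chain hα hd h1 hτ (p := x) (θ := 0) hhp hE le_rfl zero_le_one
      (by rw [e1, e3]; exact ho) (by rw [e1, e3]; exact hen')
    have c2 := chain hα hd h1 hτ (p := y) (θ := 1) hhp hE zero_le_one le_rfl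
      (by rw [e2, e3]; exact ho) (by rw [e2, e3]; exact hen')
    rw [e1] at c1
    rw [e2] at c2
    have e4 : τ y - τ x = (vv η x h - τ x) - (vv η x h - τ y) := by abel
    have c3 := norm_sub_le (vv η x h - τ x) (vv η x h - τ y)
    rw [← e4] at c3
    have hq1 : (1/2 : ℝ) ^ α < 1 := Real.rpow_lt_one (by norm_num) (by norm_num) hα
    have c4 : (2 * h) ^ α ≤ r ^ α := Real.rpow_le_rpow (by positivity)
      (by rw [hh]; linarith [hx.1, hy.2]) hα.le
    have c5 : 160 * √E * (2 * h) ^ α / (1 - (1 / 2 : ℝ) ^ α) ≤ cK α * √E * r ^ α / 2 := by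
      have : 0 < 1 - (1/2 : ℝ) ^ α := by linarith
      calc _ ≤ 160 * √E * r ^ α / (1 - (1 / 2 : ℝ) ^ α) := by gcongr
        _ = _ := by unfold cK; field_simp; norm_num
    linarith
  have hm : ∀ u ∈ Icc a (a+r), ∀ v ∈ Icc a (a+r), 1/4 ≤ ‖τ v - τ u‖ → |y - x| ≤ |v - u| :=
    fun u hu v hv h => hmin (show (u, v) ∈ S from ⟨⟨hu, hv⟩, h⟩)
  rcases lt_trichotomy x y with h | h | h
  · refine key x y hx hy h hxy ?_
    rw [abs_of_pos (by linarith)] at hm; exact hm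
  · subst h; norm_num at hxy
  · refine key y x hy hx h (by rw [norm_sub_rev]; exact hxy) ?_
    rw [abs_of_neg (by linarith), neg_sub] at hm; exact hm

lemma far {α : ℝ} {η τ : ℝ → V} (hd : ∀ t, HasDerivAt η (τ t) t) (h1 : ∀ t, ‖τ t‖ = 1)
    {p q L E r : ℝ} (hα : 0 < α) (hE : 0 < E) (hrL : r ≤ L)
    (hen : ∫⁻ x in Icc p (p + L), ∫⁻ y in Icc q (q + L),
      ENNReal.ofReal (kK (2 * α + 4) η τ x y) ≤ ENNReal.ofReal E)
    (ho : ∀ x ∈ Icc p (p + r), ‖τ x - τ p‖ ≤ 1 / 4)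
    (hor : ⟪η p - η q, τ p⟫ = 0) (hδ : 0 < ‖η p - η q‖) (hδr : ‖η p - η q‖ ≤ r) :
    1 ≤ 128 * √E * (2 * ‖η p - η q‖) ^ α := by
  obtain ⟨δ, hδe⟩ : ∃ δ, δ = ‖η p - η q‖ := ⟨_, rfl⟩
  rw [← hδe] at hδ hδr ⊢
  have hk : ∀ x ∈ Icc p (p + δ / 8), ∀ y ∈ Icc q (q + δ / 8),
      (δ / 4) ^ 2 / (2 * δ) ^ (2 * α + 4) ≤ kK (2 * α + 4) η τ x y := by
    intro x hx y hy
    have l1 : ‖η x - η p‖ ≤ δ / 8 := (lip hd h1 p x).trans (by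
      rw [abs_le]; constructor <;> linarith [hx.1, hx.2])
    have l2 : ‖η y - η q‖ ≤ δ / 8 := (lip hd h1 q y).trans (by
      rw [abs_le]; constructor <;> linarith [hy.1, hy.2])
    have l3 : ‖τ x - τ p‖ ≤ 1 / 4 := ho x ⟨hx.1, by linarith [hx.2]⟩
    have e : η y - η x = (η y - η q) - (η x - η p) - (η p - η q) := by abel
    have n1 : ‖(η y - η q) - (η x - η p)‖ ≤ δ / 4 := by linarith [norm_sub_le (η y - η q) (η x - η p)]
    have n2 : 3 * δ / 4 ≤ ‖η y - η x‖ := by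
      rw [e, norm_sub_rev]; linarith [norm_sub_norm_le (η p - η q) ((η y - η q) - (η x - η p))]
    have n3 : ‖η y - η x‖ ≤ 2 * δ := by
      rw [e]; linarith [norm_sub_le ((η y - η q) - (η x - η p)) (η p - η q)]
    have n4 : |⟪τ x, η y - η x⟫| ≤ δ / 2 := by
      have e2 : ⟪τ x, η y - η x⟫ = ⟪τ x, (η y - η q) - (η x - η p)⟫ - ⟪τ x - τ p, η p - η q⟫ := by
        rw [e, inner_sub_right, inner_sub_left (τ x), real_inner_comm (η p - η q) (τ p), hor]; ring
      rw [e2]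
      have a1 := abs_real_inner_le_norm (τ x) ((η y - η q) - (η x - η p))
      have a2 := abs_real_inner_le_norm (τ x - τ p) (η p - η q)
      rw [h1, one_mul] at a1
      rw [← hδe] at a2
      have a3 : ‖τ x - τ p‖ * δ ≤ 1 / 4 * δ := by gcongr
      have a4 := abs_sub (⟪τ x, (η y - η q) - (η x - η p)⟫) (⟪τ x - τ p, η p - η q⟫)
      linarith
    have n5 : δ / 4 ≤ nN η τ x y := by
      unfold nN
      have := norm_sub_norm_le (η y - η x) (⟪τ x, η y - η x⟫ • τ x)
      rw [norm_smul, h1, mul_one, Real.norm_eq_abs] at this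
      linarith
    unfold kK
    have : 0 < ‖η y - η x‖ := by linarith
    gcongr
  have hb : ENNReal.ofReal ((δ / 4) ^ 2 / (2 * δ) ^ (2 * α + 4)) * ENNReal.ofReal (δ / 8) *
      ENNReal.ofReal (δ / 8) ≤ ENNReal.ofReal E := by
    refine le_trans ?_ hen
    have hs : δ / 8 ≤ L := by linarith
    refine le_trans ?_ (lintegral_mono_set (Icc_subset_Icc_right (by linarith : p + δ / 8 ≤ p + L)))
    have hv : ∀ t : ℝ, volume (Icc t (t + δ / 8)) = ENNReal.ofReal (δ / 8) := fun t => by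
      rw [Real.volume_Icc, add_sub_cancel_left]
    rw [← hv p, ← setLIntegral_const]
    refine setLIntegral_mono' measurableSet_Icc fun x hx => ?_
    refine le_trans ?_ (lintegral_mono_set (Icc_subset_Icc_right (by linarith : q + δ / 8 ≤ q + L)))
    rw [hv p, ← hv q, ← setLIntegral_const]
    exact setLIntegral_mono' measurableSet_Icc fun y hy => ENNReal.ofReal_le_ofReal (hk x hx y hy)
  rw [← ENNReal.ofReal_mul (by positivity), ← ENNReal.ofReal_mul (by positivity),
    ENNReal.ofReal_le_ofReal_iff hE.le] at hb
  have h2δ : 0 < 2 * δ := by positivity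
  have hpe : (2 * δ) ^ (2 * α + 4) = ((2 * δ) ^ α) ^ 2 * (2 * δ) ^ 4 := by
    rw [Real.rpow_add h2δ, mul_comm 2 α, Real.rpow_mul h2δ.le]; norm_cast
  rw [hpe] at hb
  have hA : 0 < (2 * δ) ^ α := Real.rpow_pos_of_pos h2δ _
  have hb2 : 1 ≤ (128 * √E * (2 * δ) ^ α) ^ 2 := by
    rw [mul_pow, mul_pow, Real.sq_sqrt hE.le]
    have e : (δ / 4) ^ 2 / (((2 * δ) ^ α) ^ 2 * (2 * δ) ^ 4) * (δ / 8) * (δ / 8) =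
      1 / (128 ^ 2 * ((2 * δ) ^ α) ^ 2) := by
      generalize (2 * δ) ^ α = A at hA ⊢
      field_simp; norm_num
    rw [e, div_le_iff₀ (by positivity)] at hb
    linarith
  by_contra! hc
  have : 0 ≤ 128 * √E * (2 * δ) ^ α := by positivity
  nlinarith

lemma chord_ge {η τ : ℝ → V} (hd : ∀ t, HasDerivAt η (τ t) t) (h1 : ∀ t, ‖τ t‖ = 1) {a b : ℝ}
    (hab : a ≤ b) (ho : ∀ t ∈ Icc a b, ‖τ t - τ a‖ ≤ 1 / 4) : (b - a) / 2 ≤ ‖η b - η a‖ := by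
  have := chord_close hd hab ho
  rw [norm_sub_rev] at this
  have h2 := norm_sub_norm_le ((b - a) • τ a) (η b - η a)
  rw [norm_smul, h1, mul_one, Real.norm_of_nonneg (by linarith)] at h2
  linarith

lemma energy_big {α : ℝ} (hα : 0 < α) {η τ : ℝ → V} (hd : ∀ t, HasDerivAt η (τ t) t) (h1 : ∀ t, ‖τ t‖ = 1)
    (hτ : Continuous τ) {L E : ℝ} (hL : 0 < L) (hE : 0 < E) (hp : ∀ t, η (t + L) = η t)
    (hen : ∀ a b, ∫⁻ x in Icc a (a + L), ∫⁻ y in Icc b (b + L),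
      ENNReal.ofReal (kK (2 * α + 4) η τ x y) ≤ ENNReal.ofReal E) :
    1 / 4 ≤ cK α * √E * L ^ α := by
  by_contra! hc
  have := local_osc hα hd h1 hτ hL hE (hen 0 0) hc
  have h2 := chord_ge hd h1 (a := 0) (b := 0 + L) (by linarith)
    (fun t ht => this 0 ⟨le_rfl, by linarith⟩ t ht)
  rw [hp] at h2
  simp at h2
  linarith

lemma core {α : ℝ} (hα : 0 < α) {η τ : ℝ → V} (hd : ∀ t, HasDerivAt η (τ t) t) (h1 : ∀ t, ‖τ t‖ = 1)
    (hτ : Continuous τ) {L E : ℝ} (hL : 0 < L) (hE : 0 < E) (hp : ∀ t, η (t + L) = η t)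
    (hinj : ∀ q p, q < p → p < q + L → η p ≠ η q)
    (hen : ∀ a b, ∫⁻ x in Icc a (a + L), ∫⁻ y in Icc b (b + L),
      ENNReal.ofReal (kK (2 * α + 4) η τ x y) ≤ ENNReal.ofReal E)
    {q p : ℝ} (hqp : q < p) (hpq : p < q + L) :
    min (p - q) (q + L - p) / ‖η p - η q‖ ≤
      (4 * (8 * cK α) ^ ((α + 1) / α ^ 2)) * L ^ ((α + 1) / α) * E ^ ((α + 1) / (2 * α ^ 2)) := by
  have hK := cK_ge hα
  have hKp : 0 < cK α := by linarith
  have hsE : 0 < √E := Real.sqrt_pos.2 hE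
  have hbig := energy_big hα hd h1 hτ hL hE hp hen
  obtain ⟨M, hM⟩ : ∃ M, M = 8 * cK α * √E := ⟨_, rfl⟩
  have hMp : 0 < M := by rw [hM]; positivity
  obtain ⟨r, hrd⟩ : ∃ r, r = M⁻¹ ^ (1 / α) := ⟨_, rfl⟩
  have hr : 0 < r := by rw [hrd]; positivity
  have hrα : r ^ α = M⁻¹ := by
    rw [hrd, ← Real.rpow_mul (by positivity), one_div_mul_cancel hα.ne', Real.rpow_one]
  have hKr : cK α * √E * r ^ α < 1 / 4 := by
    rw [hrα, hM]; field_simp; norm_num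
  have hrL : r < L := by
    by_contra! hc
    have : L ^ α ≤ r ^ α := Real.rpow_le_rpow hL.le hc hα.le
    have : cK α * √E * L ^ α ≤ cK α * √E * r ^ α := by gcongr
    linarith
  have hosc : ∀ x y, |y - x| ≤ r → ‖τ y - τ x‖ ≤ 1 / 4 := by
    intro x y hxy
    have hsub : Icc (min x y) (min x y + r) ⊆ Icc (min x y) (min x y + L) :=
      Icc_subset_Icc_right (by linarith)
    refine local_osc hα hd h1 hτ (a := min x y) hr hE ?_ hKr x ?_ y ?_
    · exact le_trans ((lintegral_mono_set hsub).trans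
        (lintegral_mono fun x => lintegral_mono_set hsub)) (hen _ _)
    · rw [abs_le] at hxy
      refine ⟨min_le_left _ _, ?_⟩
      rcases min_cases x y with h | h <;> linarith
    · rw [abs_le] at hxy
      refine ⟨min_le_right _ _, ?_⟩
      rcases min_cases x y with h | h <;> linarith
  have hnear : ∀ x y, x ≤ y → y - x ≤ r → (y - x) / 2 ≤ ‖η y - η x‖ := by
    intro x y hxy hyr
    refine chord_ge hd h1 hxy fun t ht => hosc _ _ ?_
    rw [abs_le]; constructor <;> linarith [ht.1, ht.2]
  have hδ : 0 < ‖η p - η q‖ := norm_pos_iff.2 (sub_ne_zero.2 (hinj q p hqp hpq))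
  have hfar : q + r / 2 ≤ p → p ≤ q + L - r / 2 → r / 4 ≤ ‖η p - η q‖ := by
    intro ha hb
    have hcη : Continuous η := continuous_iff_continuousAt.2 fun t => (hd t).continuousAt
    obtain ⟨p0, hp0, hmin⟩ := (isCompact_Icc (a := q + r / 2) (b := q + L - r / 2)).exists_isMinOn
      (f := fun t => ‖η t - η q‖ ^ 2) ⟨p, ha, hb⟩ (by fun_prop)
    have hle : ‖η p0 - η q‖ ≤ ‖η p - η q‖ := by
      have : ‖η p0 - η q‖ ^ 2 ≤ ‖η p - η q‖ ^ 2 := hmin ⟨ha, hb⟩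
      exact (pow_le_pow_iff_left₀ (norm_nonneg _) (norm_nonneg _) two_ne_zero).1 this
    refine le_trans ?_ hle
    rcases eq_or_lt_of_le hp0.1 with h | hl
    · have := hnear q p0 (by linarith) (by linarith)
      linarith
    rcases eq_or_lt_of_le hp0.2 with h | hu
    · have := hnear p0 (q + L) (by linarith) (by linarith)
      rw [hp, norm_sub_rev] at this
      linarith
    have hloc : IsLocalMin (fun t => ‖η t - η q‖ ^ 2) p0 := hmin.isLocalMin (Icc_mem_nhds hl hu)
    have hor : ⟪η p0 - η q, τ p0⟫ = 0 := by
      have hdd := ((hd p0).sub_const (η q)).norm_sq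
      have := hloc.hasDerivAt_eq_zero hdd
      linarith
    by_contra! hc
    have hpos : 0 < ‖η p0 - η q‖ :=
      norm_pos_iff.2 (sub_ne_zero.2 (hinj q p0 (by linarith) (by linarith)))
    have hf := far hd h1 hα hE hrL.le (hen p0 q) (fun x hx => hosc _ _ (by
      rw [abs_le]; constructor <;> linarith [hx.1, hx.2])) hor hpos (by linarith)
    have h5 : (2 * ‖η p0 - η q‖) ^ α ≤ r ^ α := Real.rpow_le_rpow (by positivity) (by linarith) hα.le
    have h6 : 128 * √E * (2 * ‖η p0 - η q‖) ^ α ≤ 128 * √E * r ^ α := by gcongr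
    have h7 : 320 * √E * r ^ α ≤ cK α * √E * r ^ α := by gcongr
    have h8 : 0 ≤ √E * r ^ α := by positivity
    linarith
  have hmain : min (p - q) (q + L - p) ≤ 4 * (L / r) * ‖η p - η q‖ := by
    have hLr : 1 ≤ L / r := by rw [le_div_iff₀ hr]; linarith
    by_cases ha : q + r / 2 ≤ p
    · by_cases hb : p ≤ q + L - r / 2
      · have h := hfar ha hb
        calc min (p - q) (q + L - p) ≤ L := (min_le_left _ _).trans (by linarith)
          _ = 4 * (L / r) * (r / 4) := by field_simp
          _ ≤ _ := by gcongr
      · have := hnear p (q + L) (by linarith) (by linarith)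
        rw [hp, norm_sub_rev] at this
        have := min_le_right (p - q) (q + L - p)
        nlinarith
    · have := hnear q p (by linarith) (by linarith)
      have := min_le_left (p - q) (q + L - p)
      nlinarith
  rw [div_le_iff₀ hδ]
  refine hmain.trans (mul_le_mul_of_nonneg_right ?_ hδ.le)
  have hLr : 1 ≤ L / r := by rw [le_div_iff₀ hr]; linarith
  have hex : 1 ≤ (α + 1) / α := by rw [le_div_iff₀ hα]; linarith
  have : L / r ≤ (L / r) ^ ((α + 1) / α) := Real.self_le_rpow_of_one_le hLr hex
  have e : (L / r) ^ ((α + 1) / α) = (8 * cK α) ^ ((α + 1) / α ^ 2) * L ^ ((α + 1) / α) *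
      E ^ ((α + 1) / (2 * α ^ 2)) := by
    have e1 : L / r = L * M ^ (1 / α) := by
      rw [hrd, Real.inv_rpow hMp.le, div_inv_eq_mul]
    rw [e1, Real.mul_rpow hL.le (by positivity), ← Real.rpow_mul hMp.le, hM,
      Real.mul_rpow (by positivity) hsE.le, Real.sqrt_eq_rpow, ← Real.rpow_mul hE.le]
    have e2 : 1 / α * ((α + 1) / α) = (α + 1) / α ^ 2 := by field_simp
    have e3 : 1 / 2 * ((α + 1) / α ^ 2) = (α + 1) / (2 * α ^ 2) := by field_simp
    rw [e2, e3]; ring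
  rw [e] at this
  linarith

end core

lemma shift_lint (f : ℝ → ℝ≥0∞) (hf : ∀ x, f (x + 1) = f x) (x0 : ℝ) :
    ∫⁻ x in Ico x0 (x0 + 1), f x = ∫⁻ x in I01, f x := by
  have hp : Function.Periodic f 1 := hf
  have e1 := (isAddFundamentalDomain_Ioc (T := (1:ℝ)) one_pos x0 volume).setLIntegral_eq
    (isAddFundamentalDomain_Ioc (T := (1:ℝ)) one_pos 0 volume) f (by
      rintro ⟨g, hg⟩ x
      obtain ⟨k, rfl⟩ := AddSubgroup.mem_zmultiples_iff.1 hg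
      change f (k • (1:ℝ) + x) = f x
      rw [add_comm]; exact hp.zsmul k x)
  unfold I01
  rw [setLIntegral_congr (Ico_ae_eq_Ioc (a := x0) (b := x0 + 1)), e1, zero_add,
    setLIntegral_congr (Ico_ae_eq_Ioc (a := (0:ℝ)) (b := 1))]

lemma integrand_eq {n : ℕ} (s : ℝ) (γ η τ : ℝ → En n) (σ : ℝ → ℝ) (h0 : ∀ x, deriv γ x ≠ 0)
    (hη : ∀ x, η (σ x) = γ x) (hτ : ∀ x, τ (σ x) = ‖deriv γ x‖⁻¹ • deriv γ x) (x y : ℝ) :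
    ‖Rop s γ γ x y‖ ^ 2 * muW γ x y =
      ‖deriv γ x‖ * (‖deriv γ y‖ * kK (2 * s + 1) η τ (σ x) (σ y)) := by
  have hw : ‖deriv γ x‖ ≠ 0 := norm_ne_zero_iff.2 (h0 x)
  have hN : nN η τ (σ x) (σ y) = ‖γ y - γ x - DDg γ γ x (γ y - γ x)‖ := by
    unfold nN DDg
    rw [hη, hη, hτ, real_inner_smul_left, smul_smul]
    congr 3
    field_simp
  unfold kK Rop muW
  rw [hN, hη, hη, norm_smul]
  by_cases hd : γ y - γ x = 0
  · simp [hd, DDg]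
  have hd' : 0 < ‖γ y - γ x‖ := norm_pos_iff.2 hd
  have e : ‖γ y - γ x‖ ^ (2 * s + 1) = (‖γ y - γ x‖ ^ s) ^ 2 * ‖γ y - γ x‖ := by
    rw [Real.rpow_add hd', Real.rpow_one, mul_comm 2 s, Real.rpow_mul hd'.le]; norm_cast
  have hA : 0 < ‖γ y - γ x‖ ^ s := Real.rpow_pos_of_pos hd' _
  rw [e, norm_inv, Real.norm_of_nonneg hA.le]
  generalize ‖γ y - γ x‖ ^ s = A at hA ⊢
  field_simp

lemma G_per {n : ℕ} (s : ℝ) (γ : ℝ → En n) (hp : Function.Periodic γ 1) (x y : ℝ) :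
    ‖Rop s γ γ (x + 1) y‖ ^ 2 * muW γ (x + 1) y = ‖Rop s γ γ x y‖ ^ 2 * muW γ x y ∧
    ‖Rop s γ γ x (y + 1)‖ ^ 2 * muW γ x (y + 1) = ‖Rop s γ γ x y‖ ^ 2 * muW γ x y := by
  have hd : ∀ x, deriv γ (x + 1) = deriv γ x := fun x => by
    rw [← deriv_comp_add_const]; congr 1; funext t; exact hp t
  constructor <;> simp only [Rop, muW, DDg, hd, hp x, hp y]

lemma energy_eq {n : ℕ} (s : ℝ) (γ η τ : ℝ → En n) (σ : ℝ → ℝ) (L : ℝ) (h0 : ∀ x, deriv γ x ≠ 0)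
    (hp : Function.Periodic γ 1)
    (hη : ∀ x, η (σ x) = γ x) (hτ : ∀ x, τ (σ x) = ‖deriv γ x‖⁻¹ • deriv γ x)
    (hσ : ∀ x, HasDerivAt σ ‖deriv γ x‖ x) (hm : StrictMono σ)
    (him : ∀ a, ∃ x0, σ '' Ico x0 (x0 + 1) = Ico a (a + L)) (a b : ℝ) :
    ∫⁻ x in Icc a (a + L), ∫⁻ y in Icc b (b + L),
      ENNReal.ofReal (kK (2 * s + 1) η τ x y) = EtpE s γ := by
  obtain ⟨x0, hx0⟩ := him a
  obtain ⟨y0, hy0⟩ := him b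
  have key : ∀ (c z0 : ℝ) (_ : σ '' Ico z0 (z0 + 1) = Ico c (c + L)) (g : ℝ → ℝ≥0∞),
      ∫⁻ x in Icc c (c + L), g x = ∫⁻ x in Ico z0 (z0+1), ENNReal.ofReal ‖deriv γ x‖ * g (σ x) := by
    intro c z0 hc g
    rw [← setLIntegral_congr (Ico_ae_eq_Icc (a := c) (b := c + L)), ← hc,
      lintegral_image_eq_lintegral_abs_deriv_mul measurableSet_Ico
        (fun x _ => (hσ x).hasDerivWithinAt) hm.injective.injOn]
    simp only [abs_norm]
  rw [key a x0 hx0]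
  have e1 : ∀ x, ENNReal.ofReal ‖deriv γ x‖ *
      ∫⁻ y in Icc b (b + L), ENNReal.ofReal (kK (2 * s + 1) η τ (σ x) y) =
      ∫⁻ y in I01, ENNReal.ofReal (‖Rop s γ γ x y‖ ^ 2 * muW γ x y) := by
    intro x
    rw [key b y0 hy0, ← lintegral_const_mul' _ _ ENNReal.ofReal_ne_top,
      ← shift_lint (fun y => ENNReal.ofReal (‖Rop s γ γ x y‖ ^ 2 * muW γ x y))
        (fun y => by rw [(G_per s γ hp x y).2]) y0]
    refine lintegral_congr fun y => ?_
    rw [← ENNReal.ofReal_mul (norm_nonneg _), ← ENNReal.ofReal_mul (norm_nonneg _),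
      integrand_eq s γ η τ σ h0 hη hτ]
  simp only [e1]
  exact shift_lint (fun x => ∫⁻ y in I01, ENNReal.ofReal (‖Rop s γ γ x y‖ ^ 2 * muW γ x y))
    (fun x => lintegral_congr fun y => by rw [(G_per s γ hp x y).1]) x0

lemma per_inj {n : ℕ} {γ : ℝ → En n} (hp : Function.Periodic γ 1) (hi : Set.InjOn γ I01) {x y : ℝ}
    (h1 : x < y) (h2 : y < x + 1) : γ y ≠ γ x := by
  intro h
  have hf : ∀ z, γ (Int.fract z) = γ z := fun z => by
    have := hp.sub_zsmul_eq (x := z) ⌊z⌋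
    rw [← this]; congr 1; simp
  have hmem : ∀ z : ℝ, Int.fract z ∈ I01 := fun z => ⟨Int.fract_nonneg z, Int.fract_lt_one z⟩
  have := hi (hmem y) (hmem x) (by rw [hf, hf, h])
  obtain ⟨k, hk⟩ := Int.fract_eq_fract.1 this
  have a1 : (0 : ℝ) < k := by linarith
  have a2 : (k : ℝ) < 1 := by linarith
  have a1' : 0 < k := by exact_mod_cast a1
  have a2' : k < 1 := by exact_mod_cast a2
  omega

/-- uniform distortion estimate: for `s ∈ (3/2,2)`, `α = s - 3/2` and
`β = (α+1)/(2α²)` there is `0 < C < ∞`, depending only on `s`, such that every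
injective `C¹` immersion `γ : 𝕋 → ℝⁿ` satisfies
`distor(γ) ≤ C · L(γ)^{(α+1)/α} · E(γ)^β`. -/
theorem statement2 (s : ℝ) (hs : s ∈ Set.Ioo (3 / 2 : ℝ) 2) :
    ∃ C : ℝ, 0 < C ∧ ∀ (n : ℕ), 2 ≤ n → ∀ γ : ℝ → En n,
      Function.Periodic γ 1 → ContDiff ℝ 1 γ → Set.InjOn γ I01 → (∀ x, deriv γ x ≠ 0) →
      distorE γ ≤ ENNReal.ofReal C *
          ENNReal.ofReal (arcLen γ ^ ((s - 3 / 2 + 1) / (s - 3 / 2))) *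
          EtpE s γ ^ ((s - 3 / 2 + 1) / (2 * (s - 3 / 2) ^ 2)) := by
  obtain ⟨α, hαs⟩ : ∃ α, α = s - 3 / 2 := ⟨_, rfl⟩
  have hα : 0 < α := by rw [hαs]; linarith [hs.1]
  rw [← hαs]
  have hKp : 0 < cK α := by linarith [cK_ge hα]
  refine ⟨4 * (8 * cK α) ^ ((α + 1) / α ^ 2), by positivity, ?_⟩
  intro n _ γ hp hC hinj h0
  obtain ⟨L, hLd⟩ : ∃ L, L = arcLen γ := ⟨_, rfl⟩
  rw [← hLd]
  have hdγ : ∀ x, HasDerivAt γ (deriv γ x) x := fun x =>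
    (hC.differentiable (by norm_num) x).hasDerivAt
  have hcd : Continuous (deriv γ) := hC.continuous_deriv (by norm_num)
  have hwp : ∀ x, 0 < ‖deriv γ x‖ := fun x => norm_pos_iff.2 (h0 x)
  have hwc : Continuous fun x => ‖deriv γ x‖ := hcd.norm
  have hper : Function.Periodic (fun x => ‖deriv γ x‖) 1 := fun x => by
    have : deriv γ (x + 1) = deriv γ x := by
      rw [← deriv_comp_add_const]; congr 1; funext t; exact hp t
    simp only [this]
  have hint : ∀ a b, IntervalIntegrable (fun x => ‖deriv γ x‖) volume a b :=
    fun a b => hwc.intervalIntegrable a b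
  have hL1 : L = ∫ x in (0:ℝ)..1, ‖deriv γ x‖ := by
    rw [hLd, arcLen, I01, integral_Ico_eq_integral_Ioc, intervalIntegral.integral_of_le zero_le_one]
  have hL : 0 < L := by
    rw [hL1]
    exact intervalIntegral.intervalIntegral_pos_of_pos (hint _ _) hwp one_pos
  let σ : ℝ → ℝ := fun x => ∫ t in (0:ℝ)..x, ‖deriv γ t‖
  have hσd : ∀ x, HasDerivAt σ ‖deriv γ x‖ x := fun x => (hwc.integral_hasStrictDerivAt 0 x).hasDerivAt
  have hσm : StrictMono σ := strictMono_of_deriv_pos fun x => by rw [(hσd x).deriv]; exact hwp x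
  have hσc : Continuous σ := continuous_iff_continuousAt.2 fun t => (hσd t).continuousAt
  have hσ1 : ∀ x, σ (x + 1) = σ x + L := fun x => by
    have := hper.intervalIntegral_add_eq_add 0 x hint
    rw [zero_add, ← hL1] at this
    exact this
  have hσs : Function.Surjective σ := hσc.surjective
    (hper.tendsto_atTop_intervalIntegral_of_pos (by rw [← hL1]; exact hL) one_pos)
    (hper.tendsto_atBot_intervalIntegral_of_pos (by rw [← hL1]; exact hL) one_pos)
  let σi : ℝ ≃o ℝ := StrictMono.orderIsoOfSurjective σ hσm hσs
  let φ : ℝ → ℝ := fun t => σi.symm t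
  have hφσ : ∀ x, φ (σ x) = x := fun x => σi.symm_apply_apply x
  have hσφ : ∀ t, σ (φ t) = t := fun t => σi.apply_symm_apply t
  have hφc : Continuous φ := σi.symm.continuous
  have hφd : ∀ t, HasDerivAt φ (‖deriv γ (φ t)‖)⁻¹ t := fun t =>
    HasDerivAt.of_local_left_inverse hφc.continuousAt (hσd (φ t)) (hwp _).ne'
      (Eventually.of_forall hσφ)
  have hφm : StrictMono φ := σi.symm.strictMono
  have hφ1 : ∀ t, φ (t + L) = φ t + 1 := fun t => by
    apply hσm.injective; rw [hσφ, hσ1, hσφ]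
  let η : ℝ → En n := fun t => γ (φ t)
  let τ : ℝ → En n := fun t => ‖deriv γ (φ t)‖⁻¹ • deriv γ (φ t)
  have hηd : ∀ t, HasDerivAt η (τ t) t := fun t => (hdγ (φ t)).scomp t (hφd t)
  have hτ1 : ∀ t, ‖τ t‖ = 1 := fun t => by
    simp only [τ]
    rw [norm_smul, norm_inv, norm_norm, inv_mul_cancel₀ (hwp _).ne']
  have hτc : Continuous τ := by
    have h1 : Continuous fun t => deriv γ (φ t) := hcd.comp hφc
    exact (h1.norm.inv₀ fun t => (hwp _).ne').smul h1
  have hηp : ∀ t, η (t + L) = η t := fun t => by simp only [η, hφ1]; exact hp _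
  have hηi : ∀ q p, q < p → p < q + L → η p ≠ η q := fun q p h1 h2 =>
    per_inj hp hinj (hφm h1) (by rw [← hφ1]; exact hφm h2)
  have hησ : ∀ x, η (σ x) = γ x := fun x => by simp only [η, hφσ]
  have hτσ : ∀ x, τ (σ x) = ‖deriv γ x‖⁻¹ • deriv γ x := fun x => by simp only [τ, hφσ]
  have him : ∀ a, ∃ x0, σ '' Ico x0 (x0 + 1) = Ico a (a + L) := fun a => by
    refine ⟨φ a, ?_⟩
    have := σi.image_Ico (φ a) (φ a + 1)
    change σ '' _ = Ico (σ _) (σ _) at this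
    rw [this, hσ1, hσφ]
  have hen := energy_eq s γ η τ σ L h0 hp hησ hτσ hσd hσm him
  have hex : 2 * s + 1 = 2 * α + 4 := by rw [hαs]; ring
  rw [hex] at hen
  have hβ : 0 < (α + 1) / (2 * α ^ 2) := by positivity
  by_cases htop : EtpE s γ = ⊤
  · rw [htop, ENNReal.top_rpow_of_pos hβ, ENNReal.mul_top]
    · exact le_top
    · refine mul_ne_zero ?_ ?_
      · rw [Ne, ENNReal.ofReal_eq_zero, not_le]; positivity
      · rw [Ne, ENNReal.ofReal_eq_zero, not_le]; positivity
  have hpos : EtpE s γ ≠ 0 := by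
    intro hz
    have hLα : 0 < L ^ α := Real.rpow_pos_of_pos hL _
    have := energy_big hα hηd hτ1 hτc hL (E := (1 / (8 * cK α * L ^ α)) ^ 2) (by positivity) hηp
      (fun a b => by rw [hen, hz]; exact zero_le)
    rw [Real.sqrt_sq (by positivity)] at this
    field_simp at this
    norm_num at this
  obtain ⟨E, hEd⟩ : ∃ E, E = (EtpE s γ).toReal := ⟨_, rfl⟩
  have hE : 0 < E := by rw [hEd]; exact ENNReal.toReal_pos hpos htop
  have hEE : EtpE s γ = ENNReal.ofReal E := by rw [hEd, ENNReal.ofReal_toReal htop]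
  have hcore := fun q p => core hα hηd hτ1 hτc hL hE hηp hηi (fun a b => by rw [hen, hEE]) (q := q) (p := p)
  rw [hEE, ENNReal.ofReal_rpow_of_pos hE, ← ENNReal.ofReal_mul (by positivity),
    ← ENNReal.ofReal_mul (by positivity)]
  have hkd : ∀ x y (k : ℤ), arcDist γ x y ≤ |σ (y + k) - σ x| := fun x y k => by
    have hb : BddBelow (range fun k : ℤ => |∫ t in x..(y + (k : ℝ)), ‖deriv γ t‖|) :=
      ⟨0, by rintro _ ⟨k, rfl⟩; exact abs_nonneg _⟩
    refine (ciInf_le hb k).trans_eq ?_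
    rw [← intervalIntegral.integral_interval_sub_left (hint 0 _) (hint 0 x)]
  unfold distorE
  refine iSup₂_le fun x hx => iSup₂_le fun y hy => iSup_le fun hxy => ENNReal.ofReal_le_ofReal ?_
  have k0 := hkd x y 0
  rw [Int.cast_zero, add_zero] at k0
  rcases lt_or_gt_of_ne hxy with h | h
  · have hlt : σ x < σ y := hσm h
    have hlt2 : σ y < σ x + L := by rw [← hσ1]; exact hσm (by linarith [hx.1, hy.2])
    have c := hcore (σ x) (σ y) hlt hlt2
    rw [hησ, hησ] at c
    refine le_trans ?_ c
    gcongr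
    have k1 := hkd x y (-1)
    have e : σ (y + ((-1 : ℤ) : ℝ)) = σ y - L := by
      have := hσ1 (y + ((-1 : ℤ) : ℝ))
      push_cast at this ⊢
      rw [neg_add_cancel_right] at this
      linarith
    rw [e, abs_of_neg (by linarith)] at k1
    rw [abs_of_pos (by linarith)] at k0
    exact le_min k0 (by linarith)
  · have hlt : σ y < σ x := hσm h
    have hlt2 : σ x < σ y + L := by rw [← hσ1]; exact hσm (by linarith [hy.1, hx.2])
    have c := hcore (σ y) (σ x) hlt hlt2
    rw [hησ, hησ, norm_sub_rev] at c
    refine le_trans ?_ c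
    gcongr
    have k1 := hkd x y 1
    rw [Int.cast_one, hσ1, abs_of_pos (by linarith)] at k1
    rw [abs_of_neg (by linarith)] at k0
    exact le_min (by linarith) (by linarith)
end
end

section
/- For s ∈ (3/2, 2), every embedded curve γ ∈ H^s(𝕋, ℝⁿ) (injective with |γ'| > 0 everywhere) satisfies π² ≤ E(γ) · L(γ)^{2s−3}. -/
open MeasureTheory Real Filter Set
open scoped ENNReal Topology RealInnerProductSpace

noncomputable section

lemma aux_ftc (p q : ℝ) (hpq : p ≤ q) (g g' h : ℝ → ℝ) (S : Set ℝ) (hS : Icc p q ⊆ S)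
    (hg : ∀ x ∈ S, HasDerivAt g (g' x) x) (hle : ∀ x ∈ S, |g' x| ≤ h x)
    (hc : ContinuousOn h S) :
    ENNReal.ofReal (g p - g q) ≤ ∫⁻ x in S, ENNReal.ofReal (h x) := by
  have hint : IntegrableOn h (Icc p q) := (hc.mono hS).integrableOn_Icc
  have h1 : (fun x => -g x) q - (fun x => -g x) p ≤ ∫ y in p..q, h y := by
    apply intervalIntegral.sub_le_integral_of_hasDeriv_right_of_le (g' := fun x => - g' x) hpq
    · intro x hx
      exact (hg x (hS hx)).neg.continuousAt.continuousWithinAt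
    · intro x hx
      exact (hg x (hS (Ioo_subset_Icc_self hx))).neg.hasDerivWithinAt
    · exact hint
    · intro x hx
      exact (neg_le_abs _).trans (hle x (hS (Ioo_subset_Icc_self hx)))
  have h2 : g p - g q ≤ ∫ y in Icc p q, h y := by
    rw [integral_Icc_eq_integral_Ioc, ← intervalIntegral.integral_of_le hpq]
    simpa [sub_eq_add_neg, add_comm] using h1
  calc ENNReal.ofReal (g p - g q) ≤ ENNReal.ofReal (∫ y in Icc p q, h y) :=
        ENNReal.ofReal_le_ofReal h2
    _ = ∫⁻ x in Icc p q, ENNReal.ofReal (h x) := by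
        apply ofReal_integral_eq_lintegral_ofReal hint
        filter_upwards [ae_restrict_mem measurableSet_Icc] with x hx
        exact (abs_nonneg _).trans (hle x (hS hx))
    _ ≤ _ := lintegral_mono_set hS

/-- norm of the angular velocity -/
def hh {n : ℕ} (γ : ℝ → En n) (b x : ℝ) : ℝ :=
  ‖deriv γ x - (⟪γ x - γ b, deriv γ x⟫ / ‖γ x - γ b‖ ^ 2) • (γ x - γ b)‖ / ‖γ x - γ b‖

lemma aux_sq {n : ℕ} (v D : En n) (hD : D ≠ 0) :
    ‖v - (⟪D, v⟫ / ‖D‖ ^ 2) • D‖ ^ 2 = ‖v‖ ^ 2 - ⟪D, v⟫ ^ 2 / ‖D‖ ^ 2 := by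
  have : ‖D‖ ≠ 0 := norm_ne_zero_iff.2 hD
  rw [norm_sub_sq_real, inner_smul_right, norm_smul, real_inner_comm D v, mul_pow,
    Real.norm_eq_abs, sq_abs]
  field_simp
  ring

lemma aux_der {n : ℕ} (γ : ℝ → En n) (τ : En n) (hτ : ‖τ‖ = 1) (b x c : ℝ) (hc0 : 0 < c)
    (hc1 : c < 1) (hd : DifferentiableAt ℝ γ x) (hne : γ x - γ b ≠ 0) :
    ∃ d, HasDerivAt (fun x => arcsin (c * (⟪γ x - γ b, τ⟫ / ‖γ x - γ b‖))) d x ∧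
      |d| ≤ hh γ b x := by
  have hN : 0 < ‖γ x - γ b‖ := norm_pos_iff.2 hne
  have hD : HasDerivAt (fun x => γ x - γ b) (deriv γ x) x := hd.hasDerivAt.sub_const _
  have hnum : HasDerivAt (fun x => ⟪γ x - γ b, τ⟫) ⟪deriv γ x, τ⟫ x := by
    simpa using hD.inner ℝ (hasDerivAt_const x τ)
  have hden : HasDerivAt (fun x => ‖γ x - γ b‖) (⟪γ x - γ b, deriv γ x⟫ / ‖γ x - γ b‖) x := by
    have h1 := (hD.norm_sq).sqrt (by positivity)
    have e : (fun x => √(‖γ x - γ b‖ ^ 2)) = fun x => ‖γ x - γ b‖ := by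
      ext y; exact Real.sqrt_sq (norm_nonneg _)
    rw [e] at h1
    convert h1 using 1
    rw [Real.sqrt_sq hN.le]; field_simp
  have hf := hnum.div hden hN.ne'
  set D := γ x - γ b with hDdef
  set v := deriv γ x
  have hcs : ⟪D, τ⟫ ^ 2 ≤ ‖D‖ ^ 2 := by
    have := abs_real_inner_le_norm D τ
    rw [hτ, mul_one] at this
    exact sq_le_sq' (abs_le.1 this).1 (abs_le.1 this).2
  set f := ⟪D, τ⟫ / ‖D‖ with hfdef
  have hf1 : f ^ 2 ≤ 1 := by
    rw [hfdef, div_pow]; exact (div_le_one (by positivity)).2 hcs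
  have hcf : (c * f) ^ 2 < 1 := by
    have : c ^ 2 < 1 := by nlinarith
    rw [mul_pow]; nlinarith [sq_nonneg f, sq_nonneg c]
  have hcf' : |c * f| < 1 := (sq_lt_one_iff_abs_lt_one _).1 hcf
  have hmain := (Real.hasDerivAt_arcsin (x := c * f) (by intro h; rw [h] at hcf'; norm_num at hcf')
    (by intro h; rw [h] at hcf'; norm_num at hcf')).comp x (hf.const_mul c)
  refine ⟨_, hmain, ?_⟩
  set w := v - (⟪D, v⟫ / ‖D‖ ^ 2) • D with hw
  have hwD : ⟪w, D⟫ = 0 := by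
    rw [hw, inner_sub_left, inner_smul_left, real_inner_self_eq_norm_sq, real_inner_comm D v]
    simp; field_simp; ring
  have hf' : (⟪v, τ⟫ * ‖D‖ - ⟪D, τ⟫ * (⟪D, v⟫ / ‖D‖)) / ‖D‖ ^ 2
      = ⟪w, τ - (f / ‖D‖) • D⟫ / ‖D‖ := by
    rw [inner_sub_right w, inner_smul_right w, hwD, hw, inner_sub_left v, inner_smul_left D]
    simp only [conj_trivial]; field_simp; ring
  have hperp : ‖τ - (f / ‖D‖) • D‖ = √(1 - f ^ 2) := by
    rw [← Real.sqrt_sq (norm_nonneg (τ - (f / ‖D‖) • D))]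
    congr 1
    have := aux_sq τ D hne
    rw [hτ] at this
    rw [hfdef, div_pow, div_div, ← sq]
    simpa using this
  rw [hf']
  have hcs2 := abs_real_inner_le_norm w (τ - (f / ‖D‖) • D)
  rw [hperp] at hcs2
  have hpos : 0 < √(1 - (c * f) ^ 2) := Real.sqrt_pos.2 (by linarith)
  have hcsq : c * √(1 - f ^ 2) ≤ √(1 - (c * f) ^ 2) := by
    apply Real.le_sqrt_of_sq_le
    rw [mul_pow, Real.sq_sqrt (by linarith)]
    nlinarith
  have hh_eq : hh γ b x = ‖w‖ / ‖D‖ := rfl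
  rw [hh_eq, abs_mul, abs_mul, abs_div, abs_div, abs_of_pos hpos, abs_of_pos hc0, abs_of_pos hN,
    abs_one]
  calc 1 / √(1 - (c * f) ^ 2) * (c * (|⟪w, τ - (f / ‖D‖) • D⟫| / ‖D‖))
      ≤ 1 / √(1 - (c * f) ^ 2) * (c * ((‖w‖ * √(1 - f ^ 2)) / ‖D‖)) := by gcongr
    _ = (c * √(1 - f ^ 2)) / √(1 - (c * f) ^ 2) * (‖w‖ / ‖D‖) := by ring
    _ ≤ 1 * (‖w‖ / ‖D‖) := by
        gcongr
        exact (div_le_one hpos).2 hcsq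
    _ = _ := one_mul _

lemma aux_lim {n : ℕ} (γ : ℝ → En n) (b : ℝ) (hd : DifferentiableAt ℝ γ b)
    (h0 : deriv γ b ≠ 0) :
    Tendsto (fun x => ⟪γ x - γ b, ‖deriv γ b‖⁻¹ • deriv γ b⟫ / ‖γ x - γ b‖) (𝓝[>] b) (𝓝 1) ∧
    Tendsto (fun x => ⟪γ x - γ b, ‖deriv γ b‖⁻¹ • deriv γ b⟫ / ‖γ x - γ b‖) (𝓝[<] b)
      (𝓝 (-1)) := by
  have hN : 0 < ‖deriv γ b‖ := norm_pos_iff.2 h0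
  have hs := hasDerivAt_iff_tendsto_slope.1 hd.hasDerivAt
  set τ := ‖deriv γ b‖⁻¹ • deriv γ b with hτ
  have hF : Tendsto (fun x => ⟪slope γ b x, τ⟫ / ‖slope γ b x‖) (𝓝[≠] b) (𝓝 1) := by
    have := (hs.inner (𝕜 := ℝ) (tendsto_const_nhds (x := τ))).div hs.norm hN.ne'
    have e : ⟪deriv γ b, τ⟫ / ‖deriv γ b‖ = 1 := by
      rw [hτ, inner_smul_right, real_inner_self_eq_norm_sq]; field_simp
    rw [e] at this
    exact this
  constructor
  · refine (hF.mono_left (nhdsWithin_mono _ (fun x hx => ne_of_gt hx))).congr' ?_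
    filter_upwards [self_mem_nhdsWithin] with x hx
    have hx' : 0 < x - b := sub_pos.2 hx
    rw [slope_def_module, inner_smul_left, norm_smul, Real.norm_eq_abs, abs_of_pos (inv_pos.2 hx')]
    simp only [conj_trivial]
    exact mul_div_mul_left _ _ (inv_pos.2 hx').ne'
  · refine ((hF.mono_left (nhdsWithin_mono _ (fun x hx => ne_of_lt hx))).neg).congr' ?_
    filter_upwards [self_mem_nhdsWithin] with x hx
    have hx' : x - b < 0 := sub_neg.2 hx
    rw [slope_def_module, inner_smul_left, norm_smul, Real.norm_eq_abs, abs_of_neg (inv_lt_zero.2 hx')]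
    simp only [conj_trivial]
    rw [neg_mul, div_neg, neg_neg]
    exact mul_div_mul_left _ _ (inv_lt_zero.2 hx').ne

lemma aux_pi {n : ℕ} (γ : ℝ → En n) (hper : γ 1 = γ 0) (hC : ContDiff ℝ 1 γ)
    (hinj : Set.InjOn γ I01) (himm : ∀ x, deriv γ x ≠ 0) (b : ℝ) (hb : b ∈ Ioo (0 : ℝ) 1) :
    ENNReal.ofReal π ≤ ∫⁻ x in I01, ENNReal.ofReal (hh γ b x) := by
  have hdiff : Differentiable ℝ γ := hC.differentiable (by norm_num)
  have hcd : Continuous (deriv γ) := hC.continuous_deriv le_rfl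
  have hne : ∀ x ∈ Icc (0 : ℝ) 1, x ≠ b → γ x - γ b ≠ 0 := by
    intro x hx hxb h
    have h' := sub_eq_zero.1 h
    rcases eq_or_lt_of_le hx.2 with h1 | h1
    · subst h1
      rw [hper] at h'
      have := hinj (show (0 : ℝ) ∈ I01 by simp [I01]) (show b ∈ I01 from ⟨hb.1.le, hb.2⟩) h'
      exact hb.1.ne this
    · exact hxb (hinj (show x ∈ I01 from ⟨hx.1, h1⟩) (show b ∈ I01 from ⟨hb.1.le, hb.2⟩) h')
  set τ := ‖deriv γ b‖⁻¹ • deriv γ b with hτ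
  have hτ1 : ‖τ‖ = 1 := by
    rw [hτ, norm_smul, norm_inv, norm_norm]
    exact inv_mul_cancel₀ (norm_ne_zero_iff.2 (himm b))
  have hcont : ∀ S : Set ℝ, (∀ x ∈ S, γ x - γ b ≠ 0) → ContinuousOn (hh γ b) S := by
    intro S hS
    have c1 : ContinuousOn (fun x => γ x - γ b) S := (hdiff.continuous.sub continuous_const).continuousOn
    have c2 : ContinuousOn (fun x => ‖γ x - γ b‖) S := c1.norm
    unfold hh
    have c3 : ContinuousOn (fun x => ⟪γ x - γ b, deriv γ x⟫) S :=
      ((hdiff.continuous.sub continuous_const).inner hcd).continuousOn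
    have c4 : ContinuousOn (fun x => ⟪γ x - γ b, deriv γ x⟫ / ‖γ x - γ b‖ ^ 2) S :=
      c3.div (c2.pow 2) (fun x hx => pow_ne_zero 2 (norm_ne_zero_iff.2 (hS x hx)))
    have c5 : ContinuousOn (fun x => deriv γ x -
        (⟪γ x - γ b, deriv γ x⟫ / ‖γ x - γ b‖ ^ 2) • (γ x - γ b)) S :=
      hcd.continuousOn.sub (c4.smul c1)
    exact c5.norm.div c2 (fun x hx => norm_ne_zero_iff.2 (hS x hx))
  obtain ⟨hl1, hl2⟩ := aux_lim γ b (hdiff b) (himm b)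
  have key : ∀ c ∈ Ioo (0 : ℝ) 1,
      ENNReal.ofReal (2 * arcsin c) ≤ ∫⁻ x in I01, ENNReal.ofReal (hh γ b x) := by
    intro c hc
    set g := fun x => arcsin (c * (⟪γ x - γ b, τ⟫ / ‖γ x - γ b‖)) with hg
    have hex : ∀ x, ∃ d, γ x - γ b ≠ 0 → HasDerivAt g d x ∧ |d| ≤ hh γ b x := by
      intro x
      by_cases hx : γ x - γ b ≠ 0
      · obtain ⟨d, h⟩ := aux_der γ τ hτ1 b x c hc.1 hc.2 (hdiff x) hx
        exact ⟨d, fun _ => h⟩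
      · exact ⟨0, fun h => absurd h hx⟩
    choose g' hg' using hex
    have hA : ∀ x ∈ Ico 0 b, γ x - γ b ≠ 0 :=
      fun x hx => hne x ⟨hx.1, hx.2.le.trans hb.2.le⟩ hx.2.ne
    have hB : ∀ x ∈ Ioc b 1, γ x - γ b ≠ 0 :=
      fun x hx => hne x ⟨hb.1.le.trans hx.1.le, hx.2⟩ hx.1.ne'
    have t1 : Tendsto g (𝓝[>] b) (𝓝 (arcsin c)) := by
      have := (Real.continuous_arcsin.tendsto (c * 1)).comp (hl1.const_mul c)
      rw [mul_one] at this
      exact this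
    have t2 : Tendsto g (𝓝[<] b) (𝓝 (-arcsin c)) := by
      have := (Real.continuous_arcsin.tendsto (c * (-1))).comp (hl2.const_mul c)
      rw [mul_neg_one, Real.arcsin_neg] at this
      exact this
    have i1 : ENNReal.ofReal (g 0 - (-arcsin c)) ≤ ∫⁻ x in Ico 0 b, ENNReal.ofReal (hh γ b x) := by
      refine le_of_tendsto ((ENNReal.continuous_ofReal.tendsto _).comp
        ((tendsto_const_nhds (x := g 0)).sub t2)) ?_
      filter_upwards [Ioo_mem_nhdsLT hb.1] with q hq
      exact aux_ftc 0 q hq.1.le g g' _ _ (fun x hx => ⟨hx.1, hx.2.trans_lt hq.2⟩)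
        (fun x hx => (hg' x (hA x hx)).1) (fun x hx => (hg' x (hA x hx)).2) (hcont _ hA)
    have i2 : ENNReal.ofReal (arcsin c - g 1) ≤ ∫⁻ x in Ioc b 1, ENNReal.ofReal (hh γ b x) := by
      refine le_of_tendsto ((ENNReal.continuous_ofReal.tendsto _).comp
        (t1.sub (tendsto_const_nhds (x := g 1)))) ?_
      filter_upwards [Ioo_mem_nhdsGT hb.2] with q hq
      exact aux_ftc q 1 hq.2.le g g' _ _ (fun x hx => ⟨hq.1.trans_le hx.1, hx.2⟩)
        (fun x hx => (hg' x (hB x hx)).1) (fun x hx => (hg' x (hB x hx)).2) (hcont _ hB)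
    have g01 : g 1 = g 0 := by simp only [hg, hper]
    calc ENNReal.ofReal (2 * arcsin c)
        = ENNReal.ofReal ((g 0 - (-arcsin c)) + (arcsin c - g 1)) := by rw [g01]; congr 1; ring
      _ ≤ ENNReal.ofReal (g 0 - (-arcsin c)) + ENNReal.ofReal (arcsin c - g 1) :=
          ENNReal.ofReal_add_le
      _ ≤ _ := add_le_add i1 i2
      _ = ∫⁻ x in Ico 0 b ∪ Ioc b 1, ENNReal.ofReal (hh γ b x) := by
          rw [lintegral_union measurableSet_Ioc]
          rw [Set.disjoint_left]
          intro x hx hx'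
          exact lt_asymm hx.2 hx'.1
      _ ≤ ∫⁻ x in Icc 0 1, ENNReal.ofReal (hh γ b x) := by
          apply lintegral_mono_set
          rintro x (hx | hx)
          · exact ⟨hx.1, hx.2.le.trans hb.2.le⟩
          · exact ⟨hb.1.le.trans hx.1.le, hx.2⟩
      _ = _ := (setLIntegral_congr Ico_ae_eq_Icc).symm
  have hlim : Tendsto (fun c : ℝ => ENNReal.ofReal (2 * arcsin c)) (𝓝[<] 1)
      (𝓝 (ENNReal.ofReal π)) := by
    have : Continuous (fun c : ℝ => ENNReal.ofReal (2 * arcsin c)) :=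
      ENNReal.continuous_ofReal.comp (continuous_const.mul Real.continuous_arcsin)
    have h := (this.tendsto 1).mono_left (nhdsWithin_le_nhds (s := Iio 1))
    convert h using 3
    rw [Real.arcsin_one]; ring
  refine le_of_tendsto hlim ?_
  filter_upwards [Ioo_mem_nhdsLT (zero_lt_one' ℝ)] with c hc
  exact key c hc

/-- pointwise identity -/
lemma aux_int {n : ℕ} (s : ℝ) (γ : ℝ → En n) (b x : ℝ) (hx : deriv γ x ≠ 0)
    (hne : γ x - γ b ≠ 0) :
    ‖Rop s γ γ x b‖ ^ 2 * muW γ x b =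
      ‖deriv γ b‖ * (‖γ x - γ b‖ ^ (2 * s - 3))⁻¹ * (hh γ b x ^ 2 / ‖deriv γ x‖) := by
  have hN : 0 < ‖γ x - γ b‖ := norm_pos_iff.2 hne
  have hV : 0 < ‖deriv γ x‖ := norm_pos_iff.2 hx
  have e1 : ‖γ b - γ x - DDg γ γ x (γ b - γ x)‖ ^ 2 =
      ‖γ x - γ b‖ ^ 2 - ⟪deriv γ x, γ b - γ x⟫ ^ 2 / ‖deriv γ x‖ ^ 2 := by
    rw [norm_sub_rev (γ x), ← aux_sq _ _ hx, DDg, div_eq_inv_mul]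
  have e2 : hh γ b x ^ 2 = (‖deriv γ x‖ ^ 2 - ⟪deriv γ x, γ b - γ x⟫ ^ 2 / ‖γ x - γ b‖ ^ 2)
      / ‖γ x - γ b‖ ^ 2 := by
    rw [hh, div_pow, aux_sq _ _ hne]
    congr 3
    rw [real_inner_comm, ← neg_sub (γ x) (γ b), inner_neg_right]; ring
  have e3 : (‖γ x - γ b‖ ^ s) ^ 2 = ‖γ x - γ b‖ ^ (2 * s - 3) * ‖γ x - γ b‖ ^ 3 := by
    rw [← Real.rpow_natCast, ← Real.rpow_natCast, ← Real.rpow_mul hN.le, ← Real.rpow_add hN]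
    congr 1; push_cast; ring
  have hP : 0 < ‖γ x - γ b‖ ^ (2 * s - 3) := Real.rpow_pos_of_pos hN _
  rw [Rop, norm_smul, mul_pow, e1, e2, muW, norm_inv, inv_pow, Real.norm_eq_abs, sq_abs,
    norm_sub_rev (γ b), e3]
  field_simp

lemma aux_len {n : ℕ} (γ : ℝ → En n) (hC : ContDiff ℝ 1 γ) (b x : ℝ) (hb : b ∈ I01)
    (hx : x ∈ I01) : ‖γ x - γ b‖ ≤ arcLen γ := by
  have hdiff : Differentiable ℝ γ := hC.differentiable (by norm_num)
  have hcd : Continuous (deriv γ) := hC.continuous_deriv le_rfl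
  have main : ∀ p q : ℝ, p ≤ q → p ∈ I01 → q ∈ I01 → ‖γ q - γ p‖ ≤ arcLen γ := by
    intro p q hpq hp hq
    rw [← intervalIntegral.integral_deriv_eq_sub (fun y _ => hdiff y) (hcd.intervalIntegrable _ _)]
    refine (intervalIntegral.norm_integral_le_integral_norm hpq).trans ?_
    rw [intervalIntegral.integral_of_le hpq]
    apply setIntegral_mono_set
    · exact (hcd.norm.continuousOn.integrableOn_Icc).mono_set Ico_subset_Icc_self
    · exact Eventually.of_forall (fun _ => norm_nonneg _)
    · apply LE.le.eventuallyLE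
      intro y hy
      exact ⟨hp.1.trans hy.1.le, hy.2.trans_lt hq.2⟩
  rcases le_total b x with h | h
  · exact main b x h hb hx
  · rw [norm_sub_rev]; exact main x b h hx hb

lemma aux_inner {n : ℕ} (s : ℝ) (hs : s ∈ Set.Ioo (3 / 2 : ℝ) 2) (γ : ℝ → En n)
    (hper : γ 1 = γ 0) (hC : ContDiff ℝ 1 γ)
    (hinj : Set.InjOn γ I01) (himm : ∀ x, deriv γ x ≠ 0) (hL : 0 < arcLen γ)
    (b : ℝ) (hb : b ∈ Ioo (0 : ℝ) 1) :
    ENNReal.ofReal (‖deriv γ b‖ * (arcLen γ ^ (2 * s - 3))⁻¹ * (π ^ 2 / arcLen γ)) ≤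
      ∫⁻ x in I01, ENNReal.ofReal (‖Rop s γ γ x b‖ ^ 2 * muW γ x b) := by
  have hcd : Continuous (deriv γ) := hC.continuous_deriv le_rfl
  have hbI : b ∈ I01 := ⟨hb.1.le, hb.2⟩
  set L := arcLen γ with hLdef
  set K := ‖deriv γ b‖ * (L ^ (2 * s - 3))⁻¹ with hK
  have hK0 : 0 ≤ K := by positivity
  have hpt : ∀ᵐ x ∂(volume.restrict I01), ENNReal.ofReal (K * (2 * π / L)) * ENNReal.ofReal (hh γ b x)
      ≤ ENNReal.ofReal (‖Rop s γ γ x b‖ ^ 2 * muW γ x b) +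
        ENNReal.ofReal (K * (π / L) ^ 2 * ‖deriv γ x‖) := by
    have hmem : ∀ᵐ x ∂(volume.restrict I01), x ∈ I01 := ae_restrict_mem measurableSet_Ico
    have hneb : ∀ᵐ x ∂(volume.restrict I01), x ≠ b := by
      apply ae_restrict_of_ae
      exact Measure.ae_ne volume b
    filter_upwards [hmem, hneb] with x hx hxb
    have hne : γ x - γ b ≠ 0 := fun h => hxb (hinj hx hbI (sub_eq_zero.1 h))
    have hN : 0 < ‖γ x - γ b‖ := norm_pos_iff.2 hne
    have hV : 0 < ‖deriv γ x‖ := norm_pos_iff.2 (himm x)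
    have h0 : 0 ≤ hh γ b x := by unfold hh; positivity
    have hmu : 0 ≤ muW γ x b := by unfold muW; positivity
    rw [← ENNReal.ofReal_mul (by positivity), ← ENNReal.ofReal_add (by positivity) (by positivity)]
    apply ENNReal.ofReal_le_ofReal
    rw [aux_int s γ b x (himm x) hne]
    have hle : K ≤ ‖deriv γ b‖ * (‖γ x - γ b‖ ^ (2 * s - 3))⁻¹ := by
      rw [hK]
      gcongr
      · linarith [hs.1]
      · exact aux_len γ hC b x hbI hx
    have hq : (2 * π / L) * hh γ b x ≤ hh γ b x ^ 2 / ‖deriv γ x‖ + (π / L) ^ 2 * ‖deriv γ x‖ := by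
      have : 0 ≤ (hh γ b x - (π / L) * ‖deriv γ x‖) ^ 2 / ‖deriv γ x‖ := by positivity
      have e : (hh γ b x - (π / L) * ‖deriv γ x‖) ^ 2 / ‖deriv γ x‖ =
        hh γ b x ^ 2 / ‖deriv γ x‖ + (π / L) ^ 2 * ‖deriv γ x‖ - (2 * π / L) * hh γ b x := by
        field_simp; ring
      linarith
    calc K * (2 * π / L) * hh γ b x = K * ((2 * π / L) * hh γ b x) := by ring
      _ ≤ K * (hh γ b x ^ 2 / ‖deriv γ x‖ + (π / L) ^ 2 * ‖deriv γ x‖) := by gcongr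
      _ = K * (hh γ b x ^ 2 / ‖deriv γ x‖) + K * (π / L) ^ 2 * ‖deriv γ x‖ := by ring
      _ ≤ _ := by gcongr
  have hmeas : Measurable (fun x => ENNReal.ofReal (K * (π / L) ^ 2 * ‖deriv γ x‖)) :=
    (ENNReal.continuous_ofReal.comp (continuous_const.mul hcd.norm)).measurable
  have hI := lintegral_mono_ae hpt
  rw [lintegral_add_right _ hmeas, lintegral_const_mul' _ _ ENNReal.ofReal_ne_top] at hI
  have hint : IntegrableOn (fun x => K * (π / L) ^ 2 * ‖deriv γ x‖) I01 :=
    ((continuous_const.mul hcd.norm).continuousOn.integrableOn_Icc).mono_set Ico_subset_Icc_self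
  have hl : ∫⁻ x in I01, ENNReal.ofReal (K * (π / L) ^ 2 * ‖deriv γ x‖)
      = ENNReal.ofReal (K * (π / L) ^ 2 * L) := by
    rw [← ofReal_integral_eq_lintegral_ofReal hint (Eventually.of_forall fun x => by positivity),
      integral_const_mul]
    rfl
  rw [hl] at hI
  have hpi := aux_pi γ hper hC hinj himm b hb
  have h3 : ENNReal.ofReal (K * (2 * π / L)) * ENNReal.ofReal π ≤ _ :=
    (mul_le_mul_right hpi _).trans hI
  rw [← ENNReal.ofReal_mul (by positivity)] at h3
  have e : K * (2 * π / L) * π = K * (π ^ 2 / L) + K * (π / L) ^ 2 * L := by field_simp; ring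
  rw [e, ENNReal.ofReal_add (by positivity) (by positivity)] at h3
  exact (ENNReal.add_le_add_iff_right ENNReal.ofReal_ne_top).1 h3

/-- lower energy bound: for `s ∈ (3/2,2)`, every embedded curve
`γ ∈ H^s(𝕋,ℝⁿ)` satisfies `π² ≤ E(γ) · L(γ)^{2s−3}`. -/
theorem statement3 (s : ℝ) (hs : s ∈ Set.Ioo (3 / 2 : ℝ) 2) (n : ℕ) (hn : 2 ≤ n)
    (γ : ℝ → En n) (hγ : InM s γ) :
    ENNReal.ofReal (Real.pi ^ 2) ≤ EtpE s γ * ENNReal.ofReal (arcLen γ ^ (2 * s - 3)) := by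
  obtain ⟨⟨hP, hC, -⟩, hinj, himm⟩ := hγ
  have hper : γ 1 = γ 0 := by simpa using hP 0
  have hcd : Continuous (deriv γ) := hC.continuous_deriv le_rfl
  have hcγ : Continuous γ := hC.continuous
  have hintL : IntegrableOn (fun x => ‖deriv γ x‖) I01 :=
    (hcd.norm.continuousOn.integrableOn_Icc).mono_set Ico_subset_Icc_self
  have hL : 0 < arcLen γ := by
    have h : 0 < ∫ x in (0 : ℝ)..1, ‖deriv γ x‖ :=
      intervalIntegral.intervalIntegral_pos_of_pos (hcd.norm.intervalIntegrable _ _)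
        (fun x => norm_pos_iff.2 (himm x)) zero_lt_one
    rw [intervalIntegral.integral_of_le zero_le_one, ← integral_Ico_eq_integral_Ioc] at h
    exact h
  have hmeas : Measurable (fun p : ℝ × ℝ => ENNReal.ofReal (‖Rop s γ γ p.1 p.2‖ ^ 2 * muW γ p.1 p.2)) := by
    have m1 : Measurable γ := hcγ.measurable
    have m2 : Measurable (deriv γ) := hcd.measurable
    unfold Rop muW DDg
    fun_prop
  have hswap : EtpE s γ = ∫⁻ b in I01, ∫⁻ x in I01,
      ENNReal.ofReal (‖Rop s γ γ x b‖ ^ 2 * muW γ x b) := by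
    unfold EtpE
    exact lintegral_lintegral_swap hmeas.aemeasurable
  have hlow : ENNReal.ofReal ((arcLen γ ^ (2 * s - 3))⁻¹ * π ^ 2) ≤ EtpE s γ := by
    rw [hswap]
    have hae : ∀ᵐ b ∂(volume.restrict I01),
        ENNReal.ofReal (((arcLen γ ^ (2 * s - 3))⁻¹ * (π ^ 2 / arcLen γ)) * ‖deriv γ b‖) ≤
        ∫⁻ x in I01, ENNReal.ofReal (‖Rop s γ γ x b‖ ^ 2 * muW γ x b) := by
      have hmem : ∀ᵐ x ∂(volume.restrict I01), x ∈ I01 := ae_restrict_mem measurableSet_Ico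
      have hneb : ∀ᵐ x ∂(volume.restrict I01), x ≠ 0 := by
        apply ae_restrict_of_ae
        exact Measure.ae_ne volume 0
      filter_upwards [hmem, hneb] with b hb hb0
      have := aux_inner s hs γ hper hC hinj himm hL b ⟨lt_of_le_of_ne hb.1 (Ne.symm hb0), hb.2⟩
      convert this using 2
      ring
    refine le_trans (le_of_eq ?_) (lintegral_mono_ae hae)
    rw [← ofReal_integral_eq_lintegral_ofReal (hintL.const_mul _)
      (Eventually.of_forall fun x => by positivity), integral_const_mul]
    congr 1
    change _ = _ * arcLen γ
    field_simp
  have hp : 0 < arcLen γ ^ (2 * s - 3) := Real.rpow_pos_of_pos hL _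
  refine le_trans (le_of_eq ?_) (mul_le_mul_left hlow _)
  rw [← ENNReal.ofReal_mul (by positivity)]
  congr 1
  field_simp
end
end
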